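/- Let d₀ ≥ 2, M = 𝕋^{d₀} = ℝ^{d₀}/ℤ^{d₀} with normalized Haar measure ν and the quotient metric d induced by the Euclidean metric, and let T be the ergodic algebraic automorphism of 𝕋^{d₀} induced by a matrix S ∈ SL_{d₀}(ℤ) none of whose eigenvalues is a root of unity. Fix η > 0. Then there exist assignments g ↦ K_g^{(1)}, g ↦ K_g^{(2)} (defined for all bounded g : M → ℂ, with values in [0,∞]), a constant c₀ > 0, a decreasing sequence (φ_n)_{n≥0}, a sequence κ_m = m^β for some β ≥ 0, an integer r ≥ 1 with sup_{n≥1} n⁶(1+κ_n)φ_{nr} < ∞, and a constant c > 0, such that points (1)–(6) of Hypothesis H hold and moreover K_g^{(1)} ≤ c·C_g^{(η)} and K_g^{(2)} ≤ c·C_g^{(η)} for every bounded g, where C_g^{(η)} := sup_{x≠y} |g(x)−g(y)|/d(x,y)^η is the η-Hölder constant of g. -/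

import Mathlib

open MeasureTheory ProbabilityTheory Filter

noncomputable section

/-- Number of visits of the walk `S` to site `k` among times `1,...,n` (local time). -/
def localTime {Ω : Type*} (S : ℕ → Ω → ℤ) (n : ℕ) (k : ℤ) (ω : Ω) : ℝ :=
  ((Finset.Icc 1 n).filter (fun j => S j ω = k)).card

/-- `S` is a simple symmetric random walk on `ℤ`: `S 0 = 0` and the increments are
i.i.d. uniform on `{-1, 1}`. -/
structure IsSSRW {Ω : Type*} [MeasurableSpace Ω] (μ : Measure Ω) (S : ℕ → Ω → ℤ) : Prop where
  meas : ∀ n, Measurable (S n)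
  init : ∀ ω, S 0 ω = 0
  indep : iIndepFun (fun n ω => S (n + 1) ω - S n ω) μ
  step_one : ∀ n, μ {ω | S (n + 1) ω - S n ω = 1} = 1 / 2
  step_neg_one : ∀ n, μ {ω | S (n + 1) ω - S n ω = -1} = 1 / 2

/-- Stationarity of the sequence `(ξ k)_{k ∈ ℤ}`: all finite dimensional distributions
are invariant under a shift of the index. -/
def IsStationarySeq {Ω : Type*} [MeasurableSpace Ω] (μ : Measure Ω) (ξ : ℤ → Ω → ℝ) : Prop :=
  ∀ (j : ℤ) (q : ℕ) (k : Fin q → ℤ),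
    Measure.map (fun ω i => ξ (k i + j) ω) μ = Measure.map (fun ω i => ξ (k i) ω) μ

/-- Covariance of two complex-valued random variables. -/
def covC {Ω : Type*} [MeasurableSpace Ω] (μ : Measure Ω) (U V : Ω → ℂ) : ℂ :=
  ∫ ω, U ω * V ω ∂μ - (∫ ω, U ω ∂μ) * (∫ ω, V ω ∂μ)

/-- Condition (3): `(ξ k)` is stationary, centered, with finite fourth moments. -/
def Cond3 {Ω : Type*} [MeasurableSpace Ω] (μ : Measure Ω) (ξ : ℤ → Ω → ℝ) : Prop :=
  IsStationarySeq μ ξ ∧ (∀ k, ∫ ω, ξ k ω ∂μ = 0) ∧ ∀ k, Integrable (fun ω => (ξ k ω) ^ 4) μ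

/-- Condition (4). -/
def Cond4 {Ω : Type*} [MeasurableSpace Ω] (μ : Measure Ω) (ξ : ℤ → Ω → ℝ) : Prop :=
  Summable (fun p : ℕ => Real.sqrt (1 + (p : ℝ)) * |∫ ω, ξ 0 ω * ξ (p : ℤ) ω ∂μ|) ∧
  ∃ B : ℝ, ∀ N : ℕ, 1 ≤ N →
    ∑ k₁ ∈ Finset.range N, ∑ k₂ ∈ Finset.range N, ∑ k₃ ∈ Finset.range N,
      ∑ k₄ ∈ Finset.range N,
        |∫ ω, ξ (k₁ : ℤ) ω * ξ (k₂ : ℤ) ω * ξ (k₃ : ℤ) ω * ξ (k₄ : ℤ) ω ∂μ| ≤ B * (N : ℝ) ^ 2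

/-- The covariance inequality of condition (5), for a given constant `C` and
family `φ`. -/
def Cond5Bound {Ω : Type*} [MeasurableSpace Ω] (μ : Measure Ω) (ξ : ℤ → Ω → ℝ)
    (C : ℝ) (φ : ℕ → ℕ → ℝ) : Prop :=
  ∀ n₁ n₂ n₃ n₄ : ℕ, n₁ ≤ n₂ → n₂ ≤ n₃ → n₃ ≤ n₄ → ∀ α β : ℕ → ℝ,
    ‖covC μ
        (fun ω => Complex.exp (Complex.I * ((∑ k ∈ Finset.Icc n₁ n₂, α k * ξ (k : ℤ) ω : ℝ) : ℂ)))
        (fun ω => Complex.exp (Complex.I * ((∑ k ∈ Finset.Icc n₃ n₄, β k * ξ (k : ℤ) ω : ℝ) : ℂ)))‖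
      ≤ C * (1 + ∑ k ∈ Finset.Icc n₁ n₂, |α k| + ∑ k ∈ Finset.Icc n₃ n₄, |β k|) *
          φ (n₃ - n₂) (n₄ - n₃)

/-- Condition (5). -/
def Cond5 {Ω : Type*} [MeasurableSpace Ω] (μ : Measure Ω) (ξ : ℤ → Ω → ℝ) : Prop :=
  ∃ C : ℝ, 0 < C ∧ ∃ (φ : ℕ → ℕ → ℝ) (r : ℕ), 1 ≤ r ∧
    (∀ p s, 0 ≤ φ p s) ∧ (∀ p s, φ (p + 1) s ≤ φ p s) ∧
    Tendsto (fun s : ℕ => Real.sqrt s * φ (r * s) s) atTop (nhds 0) ∧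
    Cond5Bound μ ξ C φ
open scoped ENNReal

/-- A complex-valued function is bounded. -/
def BddF {M : Type*} (g : M → ℂ) : Prop := ∃ c : ℝ, ∀ x, ‖g x‖ ≤ c

/-- The sup norm `‖g‖_∞` of a (bounded) function. -/
def supN {M : Type*} (g : M → ℂ) : ℝ := ⨆ x, ‖g x‖

/-- The iterate `T^k` for `k ∈ ℤ` of an invertible transformation `T`
with inverse `Tinv`. -/
def Titer {M : Type*} (T Tinv : M → M) : ℤ → M → M
  | Int.ofNat n => T^[n]
  | Int.negSucc n => Tinv^[n + 1]

/-- **Hypothesis H** for the invertible dynamical system `(M, ν, T)` (with inverse `Tinv`),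
with data `c₀`, `(φ_n)`, `(κ_m)`, `K¹`, `K²` and the integer `r`. -/
structure HypothesisH {M : Type*} [MeasurableSpace M] (ν : MeasureTheory.Measure M)
    (T Tinv : M → M) (c₀ : ℝ) (φ κ : ℕ → ℝ) (K1 K2 : (M → ℂ) → ℝ≥0∞) (r : ℕ) : Prop where
  measurable_T : Measurable T
  measurable_Tinv : Measurable Tinv
  left_inv : Function.LeftInverse Tinv T
  right_inv : Function.RightInverse Tinv T
  measurePreserving_T : MeasureTheory.MeasurePreserving T ν ν
  measurePreserving_Tinv : MeasureTheory.MeasurePreserving Tinv ν ν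
  c₀_pos : 0 < c₀
  /-- (1) covariance bound -/
  cov_bound : ∀ g h : M → ℂ, BddF g → BddF h → ∀ n : ℕ,
    ENNReal.ofReal ‖covC ν g (fun x => h (T^[n] x))‖ ≤
      ENNReal.ofReal (c₀ * φ n) *
        (ENNReal.ofReal (supN g * supN h) + ENNReal.ofReal (supN h) * K1 g +
          ENNReal.ofReal (supN g) * K2 h)
  /-- (2) behaviour of `K¹` under `T^{-m}` -/
  K1_comp : ∀ g : M → ℂ, BddF g → ∀ m : ℕ,
    K1 (fun x => g (Tinv^[m] x)) ≤ ENNReal.ofReal c₀ * K1 g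
  /-- (3) behaviour of `K²` under `T^k`, `0 ≤ k ≤ m` -/
  K2_comp : ∀ h : M → ℂ, BddF h → ∀ m k : ℕ, k ≤ m →
    K2 (fun x => h (T^[k] x)) ≤ ENNReal.ofReal c₀ * K2 h * ENNReal.ofReal (1 + κ m)
  /-- (4) `K¹` of a product -/
  K1_mul : ∀ g g' : M → ℂ, BddF g → BddF g' →
    K1 (fun x => g x * g' x) ≤
      ENNReal.ofReal (supN g) * K1 g' + ENNReal.ofReal (supN g') * K1 g
  /-- (5) `K²` of a product -/
  K2_mul : ∀ h h' : M → ℂ, BddF h → BddF h' →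
    K2 (fun x => h x * h' x) ≤
      ENNReal.ofReal (supN h) * K2 h' + ENNReal.ofReal (supN h') * K2 h
  /-- (6) `(φ_n)` is decreasing … -/
  φ_anti : ∀ n, φ (n + 1) ≤ φ n
  r_pos : 1 ≤ r
  /-- … and `sup_{n ≥ 1} n⁶ (1 + κ_n) φ_{n r} < ∞` -/
  sup_fin : ∃ B : ℝ, ∀ n : ℕ, 1 ≤ n → (n : ℝ) ^ 6 * (1 + κ n) * φ (n * r) ≤ B

/-- The `d`-dimensional torus `ℝ^d/ℤ^d`, realised as `(ℝ/ℤ)^d`; it carries the product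
(normalised Haar) measure `volume`. -/
abbrev Torus (d : ℕ) : Type := Fin d → AddCircle (1 : ℝ)

/-- The quotient metric on the torus induced by the Euclidean metric on `ℝ^d`
(here `‖·‖` is the quotient norm on `ℝ/ℤ`). -/
def torusDist {d : ℕ} (x y : Torus d) : ℝ := Real.sqrt (∑ i, ‖x i - y i‖ ^ 2)

/-- The algebraic endomorphism of the torus induced by an integer matrix `S`. -/
def torusAut {d : ℕ} (S : Matrix (Fin d) (Fin d) ℤ) (x : Torus d) : Torus d :=
  fun i => ∑ j, S i j • x j

/-- `S` has no eigenvalue which is a root of unity. -/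
def NoRootOfUnityEigenvalue {d : ℕ} (S : Matrix (Fin d) (Fin d) ℤ) : Prop :=
  ∀ z : ℂ, (Matrix.charpoly (S.map (fun a => (a : ℂ)))).IsRoot z →
    ∀ n : ℕ, n ≠ 0 → z ^ n ≠ 1

/-- The η-Hölder constant `C_g^{(η)}` of `g` (with value `∞` if `g` is not η-Hölder),
for the Euclidean quotient metric on the torus. -/
def holderC {d : ℕ} (η : ℝ) (g : Torus d → ℂ) : ℝ≥0∞ :=
  ⨆ (x : Torus d) (y : Torus d) (_ : x ≠ y),
    ENNReal.ofReal (‖g x - g y‖ / torusDist x y ^ η)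

/-- A real function on the torus is η-Hölder continuous (for the Euclidean quotient
metric). -/
def IsHolder {d : ℕ} (η : ℝ) (f : Torus d → ℝ) : Prop :=
  ∃ c : ℝ, ∀ x y : Torus d, |f x - f y| ≤ c * torusDist x y ^ η

/-!
Factor the characteristic polynomial of `S` over `ℝ` as `F * G`, with the roots of `F` outside and
those of `G` inside the closed unit disc. The columns of `Bu = G(S)` contract exponentially under
backward iteration, and those of `Bs = F(S)` grow at most like `k ^ D` under forward iteration.

Let `K¹` be the Lipschitz constant for the supremum of `d(x, y) ^ η` along backward orbits, and `K²`
the one for the supremum along forward orbits, discounted by `(k + 1) ^ (D * η)`. Points (2)-(5)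
and the comparison with the Hölder constant are then formal. A function with `K¹ < ∞` is `η`-Hölder
in the directions `Bu`, so by Plancherel its Fourier coefficients at the frequencies `q` with
`R ≤ ‖Buᵀ q‖` have `ℓ²` norm `O(R ^ (-η))`; likewise for `K²` and `Bs`.

The covariance of `g` and `h ∘ T ^ n` is the sum over `q ≠ 0` of the products of the coefficients of
`g` at `-(Sᵀ ^ n q)` and of `h` at `q`, so it decays exponentially as soon as `‖Buᵀ Sᵀ ^ n q‖` or
`‖Bsᵀ q‖` is at least `c * σ ^ n` for every such `q`, with some `σ > 1`. If both were smaller than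
`R`, then `‖q‖ = O(R)` by coprimality of `F` and `G`, while `‖Buᵀ q‖ = O(θ ^ n * R)` with some
`θ < 1` by contraction. For `R = c * σ ^ n` this contradicts a Diophantine bound
`1 ≤ C * ‖q‖ ^ e * ‖Buᵀ q‖`: approximate a multiple of `G` by an integer polynomial `P` without
roots at the eigenvalues outside the unit disc; by Kronecker's theorem every eigenvalue has such a
conjugate, so `P(Sᵀ) q` is a nonzero integer vector.
-/

/-! ### Unstable and centre-stable growth of an integer matrix -/

section LinearAlgebra
open Polynomial Matrix
open scoped Matrix.Norms.Operator ComplexConjugate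

section Growth

theorem norm_pow_mul_le_of_norm_pow_mul_sub_mul_le {𝕜 𝔸 : Type*} [NormedField 𝕜] [NormedRing 𝔸]
    [NormedAlgebra 𝕜 𝔸] {a b : 𝔸} {z : 𝕜} {ρ K : ℝ} {D : ℕ} (hρ : 0 < ρ) (hz : ‖z‖ ≤ ρ)
    (hK0 : 0 ≤ K)
    (hK : ∀ k : ℕ, ‖a ^ k * ((a - algebraMap 𝕜 𝔸 z) * b)‖ ≤ K * ρ ^ k * ((k : ℝ) + 1) ^ D)
    (k : ℕ) : ‖a ^ k * b‖ ≤ (‖b‖ + K / ρ) * ρ ^ k * ((k : ℝ) + 1) ^ (D + 1) := by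
  have hlin : ‖a ^ k * b‖ ≤ ρ ^ k * (‖b‖ + K / ρ * k * ((k : ℝ) + 1) ^ D) := by
    induction k with
    | zero => simp
    | succ k ihk =>
      have hstep : a ^ (k + 1) * b =
          a ^ k * ((a - algebraMap 𝕜 𝔸 z) * b) + z • (a ^ k * b) := by
        simp only [pow_succ, sub_mul, mul_sub, mul_assoc, Algebra.algebraMap_eq_smul_one,
          smul_mul_assoc, one_mul, mul_smul_comm, sub_add_cancel]
      calc ‖a ^ (k + 1) * b‖
          ≤ ‖a ^ k * ((a - algebraMap 𝕜 𝔸 z) * b)‖ + ‖z‖ * ‖a ^ k * b‖ := by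
            rw [hstep, ← norm_smul]; exact norm_add_le _ _
        _ ≤ K * ρ ^ k * ((k : ℝ) + 1) ^ D +
            ρ * (ρ ^ k * (‖b‖ + K / ρ * k * ((k : ℝ) + 1) ^ D)) := by
          gcongr
          exact hK k
        _ = ρ ^ (k + 1) * (‖b‖ + K / ρ * (k + 1) * ((k : ℝ) + 1) ^ D) := by
          field_simp; ring
        _ ≤ ρ ^ (k + 1) * (‖b‖ + K / ρ * (k + 1 : ℕ) * (((k + 1 : ℕ) : ℝ) + 1) ^ D) := by
          push_cast; gcongr; linarith
  calc ‖a ^ k * b‖ ≤ ρ ^ k * (‖b‖ + K / ρ * k * ((k : ℝ) + 1) ^ D) := hlin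
    _ ≤ ρ ^ k * (‖b‖ * ((k : ℝ) + 1) ^ (D + 1) + K / ρ * (k + 1) * ((k : ℝ) + 1) ^ D) := by
      gcongr
      · exact le_mul_of_one_le_right (norm_nonneg b) (one_le_pow₀ (by simp))
      · simp
    _ = (‖b‖ + K / ρ) * ρ ^ k * ((k : ℝ) + 1) ^ (D + 1) := by ring

theorem exists_norm_pow_mul_le_of_aeval_prod_mul_eq_zero {𝕜 𝔸 : Type*} [NormedField 𝕜]
    [NormedRing 𝔸] [NormedAlgebra 𝕜 𝔸] (a : 𝔸) {ρ : ℝ} (hρ : 0 < ρ) {s : Multiset 𝕜}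
    (hs : ∀ z ∈ s, ‖z‖ ≤ ρ) {b : 𝔸} (hb : aeval a (s.map fun z => X - C z).prod * b = 0) :
    ∃ K : ℝ, 0 ≤ K ∧ ∀ k : ℕ, ‖a ^ k * b‖ ≤ K * ρ ^ k * ((k : ℝ) + 1) ^ s.card := by
  induction s using Multiset.induction generalizing b with
  | empty =>
    have : b = 0 := by simpa using hb
    exact ⟨0, le_rfl, fun k => by simp [this]⟩
  | cons z s ih =>
    have hzero : aeval a (s.map fun z => X - C z).prod * ((a - algebraMap 𝕜 𝔸 z) * b) = 0 := by
      rw [← hb, Multiset.map_cons, Multiset.prod_cons, mul_comm, map_mul, mul_assoc]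
      simp
    obtain ⟨K, hK0, hK⟩ := ih (fun w hw => hs w (Multiset.mem_cons_of_mem hw)) hzero
    rw [Multiset.card_cons]
    exact ⟨‖b‖ + K / ρ, by positivity, norm_pow_mul_le_of_norm_pow_mul_sub_mul_le hρ
      (hs z (Multiset.mem_cons_self z s)) hK0 hK⟩

variable {ι : Type*} [Fintype ι] [DecidableEq ι]

theorem linfty_opNorm_map_ofReal (A : Matrix ι ι ℝ) : ‖A.map ((↑) : ℝ → ℂ)‖ = ‖A‖ := by
  simp [Matrix.linfty_opNorm_def]

theorem exists_norm_pow_mul_le_of_roots (A : Matrix ι ι ℝ) {ρ : ℝ} (hρ : 0 < ρ) {F : ℝ[X]}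
    (hF : F ≠ 0) (hroots : ∀ z : ℂ, aeval z F = 0 → ‖z‖ ≤ ρ) {B : Matrix ι ι ℝ}
    (hB : aeval A F * B = 0) :
    ∃ K : ℝ, 0 ≤ K ∧ ∀ k : ℕ, ‖A ^ k * B‖ ≤ K * ρ ^ k * ((k : ℝ) + 1) ^ F.natDegree := by
  let φ : Matrix ι ι ℝ →ₐ[ℝ] Matrix ι ι ℂ := Complex.ofRealAm.mapMatrix
  have hφ (M : Matrix ι ι ℝ) : ‖φ M‖ = ‖M‖ := linfty_opNorm_map_ofReal M
  have hsplit : C (F.leadingCoeff : ℂ) * ((F.aroots ℂ).map fun z => X - C z).prod =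
      F.map (algebraMap ℝ ℂ) := by
    simpa using C_leadingCoeff_mul_prod_multiset_X_sub_C
      (splits_iff_card_roots.1 (IsAlgClosed.splits (F.map (algebraMap ℝ ℂ))))
  have hzero : aeval (φ A) ((F.aroots ℂ).map fun z => X - C z).prod * φ B = 0 := by
    have h : aeval (φ A) (F.map (algebraMap ℝ ℂ)) * φ B = 0 := by
      rw [aeval_map_algebraMap, aeval_algHom_apply, ← map_mul, hB, map_zero]
    rw [← hsplit, map_mul, aeval_C, mul_assoc, Algebra.algebraMap_eq_smul_one, smul_one_mul] at h
    exact (smul_eq_zero.1 h).resolve_left (by simpa using hF)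
  obtain ⟨K, hK0, hK⟩ := exists_norm_pow_mul_le_of_aeval_prod_mul_eq_zero (φ A) hρ
    (fun z hz => hroots z (mem_aroots.1 hz).2) hzero
  have hcard : (F.aroots ℂ).card = F.natDegree := by
    exact (splits_iff_card_roots.1 (IsAlgClosed.splits _)).trans (natDegree_map _)
  refine ⟨K, hK0, fun k => ?_⟩
  rw [← hφ, map_mul, map_pow, ← hcard]
  exact hK k

theorem aeval_reverse_of_mul_eq_one {R 𝔸 : Type*} [CommSemiring R] [Semiring 𝔸] [Algebra R 𝔸]
    {a a' : 𝔸} (h : a' * a = 1) (F : R[X]) :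
    aeval a' F.reverse = a' ^ F.natDegree * aeval a F := by
  have hpow {i : ℕ} (hi : i ≤ F.natDegree) : a' ^ F.natDegree * a ^ i = a' ^ (F.natDegree - i) := by
    rw [← Nat.sub_add_cancel hi, pow_add, mul_assoc, pow_mul_pow_eq_one i h, mul_one,
      Nat.sub_add_cancel hi]
  rw [aeval_eq_sum_range' (Nat.lt_succ_of_le F.reverse_natDegree_le), aeval_eq_sum_range,
    Finset.mul_sum, ← Finset.sum_range_reflect]
  refine Finset.sum_congr rfl fun i hi => ?_
  have hi : i ≤ F.natDegree := Nat.lt_succ_iff.1 (Finset.mem_range.1 hi)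
  rw [mul_smul_comm, hpow hi, Nat.succ_sub_one, coeff_reverse, revAt_le (Nat.sub_le _ _),
    Nat.sub_sub_self hi]

theorem norm_lt_one_of_aeval_reverse_eq_zero {F : ℝ[X]} (hF : F ≠ 0)
    (hroots : ∀ z : ℂ, aeval z F = 0 → 1 < ‖z‖) {z : ℂ} (hz : aeval z F.reverse = 0) :
    ‖z‖ < 1 := by
  have hz0 : z ≠ 0 := by
    rintro rfl
    simp [← coeff_zero_eq_aeval_zero', coeff_zero_reverse, hF] at hz
  have h : aeval z⁻¹ F = 0 := by
    rw [aeval_reverse_of_mul_eq_one (mul_inv_cancel₀ hz0)] at hz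
    exact (mul_eq_zero.1 hz).resolve_left (pow_ne_zero _ hz0)
  simpa [hz0, one_lt_inv₀] using hroots _ h

theorem exists_norm_le_of_forall_norm_lt_one {E : Type*} [Norm E] (s : Finset E)
    (hs : ∀ z ∈ s, ‖z‖ < 1) :
    ∃ ρ : ℝ, 0 < ρ ∧ ρ < 1 ∧ ∀ z ∈ s, ‖z‖ ≤ ρ := by
  have hle : ∀ᶠ ρ : ℝ in nhdsWithin 1 (Set.Iio 1), ∀ z ∈ s, ‖z‖ ≤ ρ :=
    (Filter.eventually_all_finset s).2 fun z hz =>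
      Filter.mem_of_superset (Ioo_mem_nhdsLT (hs z hz)) fun ρ hρ => hρ.1.le
  obtain ⟨ρ, hle, h0, h1⟩ := (hle.and (Ioo_mem_nhdsLT one_pos)).exists
  exact ⟨ρ, h0, h1, hle⟩

theorem exists_forall_pow_mul_pow_le {r : ℝ} (h0 : 0 < r) (h1 : r < 1) (D : ℕ) :
    ∃ K : ℝ, ∀ k : ℕ, r ^ k * ((k : ℝ) + 1) ^ D ≤ K := by
  have h := (tendsto_pow_const_mul_const_pow_of_abs_lt_one D (abs_lt.2 ⟨by linarith, h1⟩)).comp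
    (Filter.tendsto_add_atTop_nat 1)
  obtain ⟨K, hK⟩ := h.bddAbove_range
  refine ⟨K / r, fun k => ?_⟩
  have hk := hK (Set.mem_range_self k)
  simp only [Function.comp_apply, Nat.cast_add_one, pow_succ r] at hk
  rw [le_div_iff₀ h0]
  linarith

theorem exists_norm_pow_mul_le_of_one_lt_roots {A A' : Matrix ι ι ℝ} (hA : A' * A = 1)
    {F : ℝ[X]} (hF : F ≠ 0) (hroots : ∀ z : ℂ, aeval z F = 0 → 1 < ‖z‖) {B : Matrix ι ι ℝ}
    (hB : aeval A F * B = 0) :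
    ∃ K θ : ℝ, 0 < θ ∧ θ < 1 ∧ ∀ k : ℕ, ‖A' ^ k * B‖ ≤ K * θ ^ k := by
  obtain ⟨ρ, hρ0, hρ1, hρ⟩ := exists_norm_le_of_forall_norm_lt_one (F.reverse.aroots ℂ).toFinset
    fun z hz => norm_lt_one_of_aeval_reverse_eq_zero hF hroots
      (mem_aroots.1 (Multiset.mem_toFinset.1 hz)).2
  have hF' : F.reverse ≠ 0 := by simpa using hF
  obtain ⟨K, hK0, hK⟩ := exists_norm_pow_mul_le_of_roots A' hρ0 hF'
    (fun z hz => hρ z (Multiset.mem_toFinset.2 (mem_aroots.2 ⟨hF', hz⟩))) (B := B)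
    (by rw [aeval_reverse_of_mul_eq_one hA, mul_assoc, hB, mul_zero])
  obtain ⟨θ, hρθ, hθ1⟩ := exists_between hρ1
  have hθ0 : 0 < θ := hρ0.trans hρθ
  obtain ⟨L, hL⟩ := exists_forall_pow_mul_pow_le (div_pos hρ0 hθ0) ((div_lt_one hθ0).2 hρθ)
    F.reverse.natDegree
  refine ⟨K * L, θ, hθ0, hθ1, fun k => (hK k).trans ?_⟩
  calc K * ρ ^ k * ((k : ℝ) + 1) ^ F.reverse.natDegree
      = K * ((ρ / θ) ^ k * ((k : ℝ) + 1) ^ F.reverse.natDegree) * θ ^ k := by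
        rw [div_pow]; field_simp
    _ ≤ K * L * θ ^ k := by gcongr; exact hL k

end Growth

section Roots

theorem eq_or_eq_conj_of_irreducible {p : ℝ[X]} (hp : Irreducible p) {z w : ℂ}
    (hz : aeval z p = 0) (hw : aeval w p = 0) : w = z ∨ w = conj z := by
  have hconj : IsConjRoot ℝ w z := by
    rw [isConjRoot_def, ← minpoly.eq_of_irreducible hp hz, ← minpoly.eq_of_irreducible hp hw]
  have : Normal ℝ ℂ := have : IsAlgClosure ℝ ℂ := ⟨inferInstance, inferInstance⟩
    IsAlgClosure.normal ℝ ℂ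
  obtain ⟨σ, rfl⟩ := isConjRoot_iff_exists_algEquiv.1 hconj
  rcases Complex.real_algHom_eq_id_or_conj (σ : ℂ →ₐ[ℝ] ℂ) with h | h
  · left; simpa using congr($h z)
  · right; simpa using congr($h z)

theorem exists_mul_eq_of_conj_mem_iff {P : ℝ[X]} (hP : P ≠ 0) {U : Set ℂ}
    (hU : ∀ z, conj z ∈ U ↔ z ∈ U) :
    ∃ F G : ℝ[X], F * G = P ∧
      (∀ z : ℂ, aeval z F = 0 → z ∈ U) ∧ ∀ z : ℂ, aeval z G = 0 → z ∉ U := by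
  induction P using UniqueFactorizationMonoid.induction_on_prime with
  | h₁ => contradiction
  | h₂ P hu =>
    obtain ⟨c, hc, rfl⟩ := isUnit_iff.1 hu
    exact ⟨C c, 1, mul_one _, by simp [hc.ne_zero], by simp⟩
  | h₃ P p hP0 hp ih =>
    obtain ⟨F, G, rfl, hF, hG⟩ := ih hP0
    by_cases hpU : ∃ z ∈ U, aeval z p = 0
    · obtain ⟨z, hzU, hz⟩ := hpU
      refine ⟨p * F, G, mul_assoc _ _ _, fun w hw => ?_, hG⟩
      rw [map_mul, mul_eq_zero] at hw
      refine hw.elim (fun hw => ?_) (hF w)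
      rcases eq_or_eq_conj_of_irreducible hp.irreducible hz hw with rfl | rfl
      exacts [hzU, (hU z).2 hzU]
    · refine ⟨F, p * G, mul_left_comm _ _ _, hF, fun w hw hwU => ?_⟩
      rw [map_mul, mul_eq_zero] at hw
      exact hw.elim (fun hw => hpU ⟨w, hwU, hw⟩) fun hw => hG w hw hwU

/-- Kronecker's theorem: otherwise the minimal polynomial of `z` would have Mahler measure `1`. -/
theorem exists_one_lt_norm_of_forall_pow_ne_one {z : ℂ} (hz : IsIntegral ℤ z) (hz0 : z ≠ 0)
    (hpow : ∀ n : ℕ, n ≠ 0 → z ^ n ≠ 1) :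
    ∃ w : ℂ, 1 < ‖w‖ ∧ ∀ P : ℤ[X], aeval z P = 0 → aeval w P = 0 := by
  by_contra! hcon
  have hroot : ∀ w ∈ (minpoly ℤ z).aroots ℂ, ‖w‖ ≤ 1 := by
    intro w hw
    by_contra! hw1
    obtain ⟨P, hPz, hPw⟩ := hcon w hw1
    obtain ⟨Q, rfl⟩ := minpoly.isIntegrallyClosed_dvd hz hPz
    exact hPw (by rw [map_mul, (mem_aroots.1 hw).2, zero_mul])
  have hmahler : ((minpoly ℤ z).map (Int.castRingHom ℂ)).mahlerMeasure = 1 := by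
    rw [mahlerMeasure_eq_leadingCoeff_mul_prod_roots, ((minpoly.monic hz).map _).leadingCoeff,
      norm_one, one_mul]
    refine Multiset.prod_eq_one fun x hx => ?_
    obtain ⟨w, hw, rfl⟩ := Multiset.mem_map.1 hx
    exact max_eq_left (hroot w hw)
  obtain ⟨n, hn, hzn⟩ := pow_eq_one_of_mahlerMeasure_eq_one hmahler hz0
    (mem_aroots.2 ⟨minpoly.ne_zero hz, minpoly.aeval ℤ z⟩)
  exact hpow n hn.ne' hzn

end Roots

section Diophantine

theorem exists_nat_le_pow_card_forall_abs_mul_sub_le {ι : Type*} [Fintype ι] (α : ι → ℝ) {n : ℕ}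
    (hn : 0 < n) :
    ∃ l : ℕ, 0 < l ∧ l ≤ n ^ Fintype.card ι ∧ ∃ p : ι → ℤ, ∀ i, |l * α i - p i| ≤ 1 / n := by
  classical
  have hn' : (0 : ℝ) < n := Nat.cast_pos.2 hn
  let box (l : ℕ) (i : ι) : ℤ := ⌊n * Int.fract (l * α i)⌋
  have hbox : ∀ l ∈ Finset.range (n ^ Fintype.card ι + 1),
      box l ∈ Fintype.piFinset fun _ : ι => Finset.Ico (0 : ℤ) n := by
    intro l _
    refine Fintype.mem_piFinset.2 fun i => Finset.mem_Ico.2 ⟨?_, Int.floor_lt.2 ?_⟩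
    · exact Int.floor_nonneg.2 (mul_nonneg hn'.le (Int.fract_nonneg _))
    · exact mul_lt_of_lt_one_right hn' (Int.fract_lt_one _)
  obtain ⟨a, b, hb, hab, heq⟩ : ∃ a, ∃ b ∈ Finset.range (n ^ Fintype.card ι + 1),
      a < b ∧ box a = box b := by
    obtain ⟨a, ha, b, hb, hab, heq⟩ :=
      Finset.exists_ne_map_eq_of_card_lt_of_maps_to (by simp) hbox
    rcases hab.lt_or_gt with h | h
    exacts [⟨a, b, hb, h, heq⟩, ⟨b, a, ha, h, heq.symm⟩]
  refine ⟨b - a, Nat.sub_pos_of_lt hab, (Nat.sub_le _ _).trans (Finset.mem_range_succ_iff.1 hb),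
    fun i => ⌊b * α i⌋ - ⌊a * α i⌋, fun i => ?_⟩
  have hlt := (Int.abs_sub_lt_one_of_floor_eq_floor (congrFun heq i)).le
  rw [← mul_sub, abs_mul, abs_of_pos hn', ← le_div_iff₀' hn', abs_sub_comm, Int.fract,
    Int.fract] at hlt
  rw [Nat.cast_sub hab.le, Int.cast_sub]
  refine (congrArg _ ?_).trans_le hlt
  ring

theorem exists_int_polynomial_near_nat_multiple {p : ℝ[X]} {m : ℕ} (hp : p.natDegree ≤ m) {n : ℕ}
    (hn : 0 < n) :
    ∃ (l : ℕ) (P : ℤ[X]), 0 < l ∧ l ≤ n ^ (m + 1) ∧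
      (C (l : ℝ) * p - P.map (algebraMap ℤ ℝ)).natDegree ≤ m ∧
      ∀ i, |(C (l : ℝ) * p - P.map (algebraMap ℤ ℝ)).coeff i| ≤ 1 / n := by
  obtain ⟨l, hl0, hl, v, hv⟩ :=
    exists_nat_le_pow_card_forall_abs_mul_sub_le (fun i : Fin (m + 1) => p.coeff i) hn
  have hdeg : (C (l : ℝ) * p - (ofFn (m + 1) v).map (algebraMap ℤ ℝ)).natDegree ≤ m :=
    (natDegree_sub_le_of_le ((natDegree_C_mul_le _ _).trans hp)
      (natDegree_map_le.trans (Nat.lt_succ_iff.1 (ofFn_natDegree_lt m.succ_pos v)))).trans_eq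
      (max_self m)
  refine ⟨l, ofFn (m + 1) v, hl0, by simpa using hl, hdeg, fun i => ?_⟩
  rcases lt_or_ge i (m + 1) with hi | hi
  · simpa [ofFn_coeff_eq_val_of_lt v hi] using hv ⟨i, hi⟩
  · rw [coeff_eq_zero_of_natDegree_lt (hdeg.trans_lt hi), abs_zero]
    positivity

theorem norm_aeval_le_mul_sum_norm_pow {𝔸 : Type*} [NormedRing 𝔸] [NormedAlgebra ℝ 𝔸] (a : 𝔸)
    {E : ℝ[X]} {m : ℕ} {ε : ℝ} (hdeg : E.natDegree ≤ m) (hE : ∀ i, |E.coeff i| ≤ ε) :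
    ‖aeval a E‖ ≤ ε * ∑ i ∈ Finset.range (m + 1), ‖a ^ i‖ := by
  rw [aeval_eq_sum_range' (Nat.lt_succ_of_le hdeg), Finset.mul_sum]
  refine norm_sum_le_of_le _ fun i _ => ?_
  rw [norm_smul]
  exact mul_le_mul_of_nonneg_right (hE i) (norm_nonneg _)

theorem one_le_norm_intCast_comp {ι : Type*} [Fintype ι] {q : ι → ℤ} (hq : q ≠ 0) :
    1 ≤ ‖(Int.cast ∘ q : ι → ℝ)‖ := by
  obtain ⟨i, hi⟩ := Function.ne_iff.1 hq
  calc (1 : ℝ) ≤ |(q i : ℝ)| := by exact_mod_cast Int.one_le_abs hi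
    _ ≤ ‖(Int.cast ∘ q : ι → ℝ)‖ := norm_le_pi_norm (Int.cast ∘ q : ι → ℝ) i

variable {ι : Type*} [Fintype ι] [DecidableEq ι]

/-- The real matrix with the same entries as an integer matrix. -/
abbrev realMatrix : Matrix ι ι ℤ →ₐ[ℤ] Matrix ι ι ℝ := (Algebra.ofId ℤ ℝ).mapMatrix

theorem realMatrix_mulVec_intCast (N : Matrix ι ι ℤ) (q : ι → ℤ) :
    realMatrix N *ᵥ (Int.cast ∘ q) = Int.cast ∘ (N *ᵥ q) := by
  ext i
  exact (RingHom.map_mulVec (Int.castRingHom ℝ) N q i).symm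

/-- Halmos' criterion for ergodicity of the torus endomorphism induced by `N`, read off the
eigenvalues; the condition `z ≠ 0` says that `N` is nonsingular. -/
def HasErgodicSpectrum (N : Matrix ι ι ℤ) : Prop :=
  ∀ z : ℂ, aeval z N.charpoly = 0 → z ≠ 0 ∧ ∀ n : ℕ, n ≠ 0 → z ^ n ≠ 1

theorem aeval_realMatrix (N : Matrix ι ι ℤ) (P : ℤ[X]) :
    aeval (realMatrix N) (P.map (algebraMap ℤ ℝ)) = realMatrix (aeval N P) := by
  rw [aeval_map_algebraMap, aeval_algHom_apply]

theorem aeval_mulVec_ne_zero {N : Matrix ι ι ℤ} (hN : HasErgodicSpectrum N) {P : ℤ[X]}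
    (hP : ∀ z : ℂ, aeval z N.charpoly = 0 → 1 < ‖z‖ → aeval z P ≠ 0) {q : ι → ℤ} (hq : q ≠ 0) :
    aeval N P *ᵥ q ≠ 0 := by
  have hcop : IsCoprime (P.map (algebraMap ℤ ℝ)) (N.charpoly.map (algebraMap ℤ ℝ)) := by
    refine (isCoprime_iff_aeval_ne_zero_of_isAlgClosed ℝ ℂ _ _).2 fun z => ?_
    simp only [aeval_map_algebraMap]
    by_contra! hz
    obtain ⟨w, hw1, hw⟩ := exists_one_lt_norm_of_forall_pow_ne_one
      ⟨N.charpoly, N.charpoly_monic, hz.2⟩ (hN z hz.2).1 (hN z hz.2).2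
    exact hP w (hw _ hz.2) hw1 (hw _ hz.1)
  obtain ⟨u, v, huv⟩ := hcop
  have hinv : aeval (realMatrix N) u * realMatrix (aeval N P) = 1 := by
    simpa only [map_add, map_mul, map_one, aeval_realMatrix, aeval_self_charpoly, map_zero,
      mul_zero, add_zero] using congr(aeval (realMatrix N) $huv)
  intro h
  have hzero : (Int.cast ∘ q : ι → ℝ) = 0 := by
    rw [← one_mulVec (Int.cast ∘ q : ι → ℝ), ← hinv, ← mulVec_mulVec, realMatrix_mulVec_intCast, h]
    ext i
    simp [mulVec, dotProduct]
  exact not_le_of_gt one_pos (by simpa [hzero] using one_le_norm_intCast_comp hq)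

theorem exists_pos_forall_mul_sum_norm_pow_lt {Z : Set ℂ} (hZ : Z.Finite) {p : ℝ[X]}
    (hp : ∀ z ∈ Z, aeval z p ≠ 0) (m : ℕ) :
    ∃ ε : ℝ, 0 < ε ∧ ∀ z ∈ Z, ε * ∑ i ∈ Finset.range m, ‖z ^ i‖ < ‖aeval z p‖ := by
  have hle : ∀ᶠ ε : ℝ in nhdsWithin 0 (Set.Ioi 0), ∀ z ∈ Z,
      ε * ∑ i ∈ Finset.range m, ‖z ^ i‖ < ‖aeval z p‖ := by
    refine (Filter.eventually_all_finite hZ).2 fun z hz => ?_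
    have hlim : Filter.Tendsto (fun ε : ℝ => ε * ∑ i ∈ Finset.range m, ‖z ^ i‖)
        (nhdsWithin 0 (Set.Ioi 0)) (nhds (0 * ∑ i ∈ Finset.range m, ‖z ^ i‖)) :=
      (Filter.tendsto_id.mul_const _).mono_left nhdsWithin_le_nhds
    exact hlim.eventually_lt_const (by simpa using hp z hz)
  obtain ⟨ε, hε, hε0⟩ := (hle.and self_mem_nhdsWithin).exists
  exact ⟨ε, hε0, hε⟩

theorem aeval_ne_zero_of_near_nat_multiple {p : ℝ[X]} {P : ℤ[X]} {m l : ℕ} (hl : 0 < l) {ε : ℝ}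
    (hdeg : (C (l : ℝ) * p - P.map (algebraMap ℤ ℝ)).natDegree ≤ m)
    (hcoeff : ∀ i, |(C (l : ℝ) * p - P.map (algebraMap ℤ ℝ)).coeff i| ≤ ε) {z : ℂ}
    (hz : ε * ∑ i ∈ Finset.range (m + 1), ‖z ^ i‖ < ‖aeval z p‖) : aeval z P ≠ 0 := by
  intro hPz
  refine (norm_aeval_le_mul_sum_norm_pow z hdeg hcoeff).not_gt (hz.trans_le ?_)
  rw [map_sub, aeval_map_algebraMap, hPz, map_mul, sub_zero, norm_mul]
  exact le_mul_of_one_le_left (norm_nonneg _) (by simpa using Nat.one_le_iff_ne_zero.2 hl.ne')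

theorem one_le_two_mul_pow_mul_norm_aeval_mulVec {N : Matrix ι ι ℤ} (hN : HasErgodicSpectrum N)
    {p : ℝ[X]} {m n : ℕ} (hm : p.natDegree ≤ m) (hn : 0 < n)
    (hp : ∀ z : ℂ, aeval z N.charpoly = 0 → 1 < ‖z‖ →
      1 / n * ∑ i ∈ Finset.range (m + 1), ‖z ^ i‖ < ‖aeval z p‖)
    {q : ι → ℤ} (hq : q ≠ 0)
    (hqn : 2 * (∑ i ∈ Finset.range (m + 1), ‖realMatrix N ^ i‖) *
      ‖(Int.cast ∘ q : ι → ℝ)‖ ≤ n) :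
    1 ≤ 2 * (n : ℝ) ^ (m + 1) * ‖aeval (realMatrix N) p *ᵥ (Int.cast ∘ q)‖ := by
  let A := realMatrix N
  let x : ι → ℝ := Int.cast ∘ q
  obtain ⟨l, P, hl0, hl, hdeg, hcoeff⟩ := exists_int_polynomial_near_nat_multiple hm hn
  have hP : 1 ≤ ‖realMatrix (aeval N P) *ᵥ x‖ := by
    rw [realMatrix_mulVec_intCast]
    exact one_le_norm_intCast_comp (aeval_mulVec_ne_zero hN (fun z hz hz1 =>
      aeval_ne_zero_of_near_nat_multiple hl0 hdeg hcoeff (hp z hz hz1)) hq)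
  have herror : ‖aeval A (C (l : ℝ) * p - P.map (algebraMap ℤ ℝ)) *ᵥ x‖ ≤ 1 / 2 := by
    calc _ ≤ 1 / n * (∑ i ∈ Finset.range (m + 1), ‖A ^ i‖) * ‖x‖ :=
          (linfty_opNorm_mulVec _ _).trans
            (by gcongr; exact norm_aeval_le_mul_sum_norm_pow A hdeg hcoeff)
      _ ≤ 1 / 2 := by
        rw [one_div_mul_eq_div, div_mul_eq_mul_div, div_le_div_iff₀ (by positivity) two_pos]
        linarith
  have hlp : (1 : ℝ) / 2 ≤ l * ‖aeval A p *ᵥ x‖ := by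
    have hsub : aeval A (C (l : ℝ) * p - P.map (algebraMap ℤ ℝ)) *ᵥ x =
        (l : ℝ) • (aeval A p *ᵥ x) - realMatrix (aeval N P) *ᵥ x := by
      rw [map_sub, aeval_realMatrix, sub_mulVec, map_mul, aeval_C, Algebra.algebraMap_eq_smul_one,
        smul_one_mul, smul_mulVec]
    rw [hsub] at herror
    have htri := norm_sub_norm_le (realMatrix (aeval N P) *ᵥ x) ((l : ℝ) • (aeval A p *ᵥ x))
    rw [norm_sub_rev, norm_smul, Real.norm_natCast] at htri
    linarith
  have hln : (l : ℝ) ≤ (n : ℝ) ^ (m + 1) := by exact_mod_cast hl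
  calc 1 ≤ 2 * (l * ‖aeval A p *ᵥ x‖) := by linarith
    _ ≤ 2 * ((n : ℝ) ^ (m + 1) * ‖aeval A p *ᵥ x‖) := by gcongr
    _ = _ := by ring

theorem exists_one_le_mul_norm_pow_mul_norm_aeval_mulVec {N : Matrix ι ι ℤ}
    (hN : HasErgodicSpectrum N) {p : ℝ[X]}
    (hp : ∀ z : ℂ, aeval z N.charpoly = 0 → 1 < ‖z‖ → aeval z p ≠ 0) :
    ∃ (K : ℝ) (e : ℕ), 0 ≤ K ∧ ∀ q : ι → ℤ, q ≠ 0 → 1 ≤ K * ‖(Int.cast ∘ q : ι → ℝ)‖ ^ e *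
      ‖aeval (realMatrix N) p *ᵥ (Int.cast ∘ q)‖ := by
  obtain ⟨ε, hε0, hε⟩ := exists_pos_forall_mul_sum_norm_pow_lt
    (Z := {z | aeval z N.charpoly = 0 ∧ 1 < ‖z‖})
    ((rootSet_finite N.charpoly ℂ).subset fun z hz =>
      mem_rootSet.2 ⟨N.charpoly_monic.ne_zero, hz.1⟩)
    (fun z hz => hp z hz.1 hz.2) (p.natDegree + 1)
  let b := 2 * ∑ i ∈ Finset.range (p.natDegree + 1), ‖realMatrix N ^ i‖ + ε⁻¹
  have hb : 0 < b := by positivity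
  refine ⟨2 * (b + 1) ^ (p.natDegree + 1), p.natDegree + 1, by positivity, fun q hq => ?_⟩
  let x : ι → ℝ := Int.cast ∘ q
  have hx : 1 ≤ ‖x‖ := one_le_norm_intCast_comp hq
  have hbn : b * ‖x‖ ≤ ⌈b * ‖x‖⌉₊ := Nat.le_ceil _
  have hn : (0 : ℝ) < ⌈b * ‖x‖⌉₊ := lt_of_lt_of_le (by positivity) hbn
  have hnε : 1 / (⌈b * ‖x‖⌉₊ : ℝ) ≤ ε := by
    rw [one_div_le hn hε0, one_div]
    calc ε⁻¹ ≤ b := le_add_of_nonneg_left (by positivity)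
      _ ≤ b * ‖x‖ := le_mul_of_one_le_right hb.le hx
      _ ≤ _ := hbn
  calc 1 ≤ 2 * (⌈b * ‖x‖⌉₊ : ℝ) ^ (p.natDegree + 1) * ‖aeval (realMatrix N) p *ᵥ x‖ :=
        one_le_two_mul_pow_mul_norm_aeval_mulVec hN le_rfl (Nat.cast_pos.1 hn)
          (fun z hz hz1 => (mul_le_mul_of_nonneg_right hnε (by positivity)).trans_lt
            (hε z ⟨hz, hz1⟩)) hq
          ((mul_le_mul_of_nonneg_right (le_add_of_nonneg_right (by positivity))
            (norm_nonneg x)).trans hbn)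
    _ ≤ 2 * ((b + 1) * ‖x‖) ^ (p.natDegree + 1) * ‖aeval (realMatrix N) p *ᵥ x‖ := by
      gcongr
      linarith [Nat.ceil_lt_add_one (show 0 ≤ b * ‖x‖ by positivity)]
    _ = _ := by rw [mul_pow]; ring

end Diophantine

section Dichotomy
variable {ι : Type*} [Fintype ι] [DecidableEq ι]

theorem exists_norm_pow_mulVec_le_of_one_lt_roots {A A' : Matrix ι ι ℝ} (hA : A' * A = 1)
    {F G : ℝ[X]} (hFG : IsCoprime F G) (hzero : aeval A (F * G) = 0) (hF : F ≠ 0)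
    (hroots : ∀ z : ℂ, aeval z F = 0 → 1 < ‖z‖) :
    ∃ K θ : ℝ, 0 < θ ∧ θ < 1 ∧ ∀ (k : ℕ) (x : ι → ℝ), aeval A F *ᵥ x = 0 →
      ‖A' ^ k *ᵥ x‖ ≤ K * θ ^ k * ‖x‖ := by
  obtain ⟨u, v, huv⟩ := hFG
  obtain ⟨K, θ, hθ0, hθ1, hK⟩ := exists_norm_pow_mul_le_of_one_lt_roots hA hF hroots
    (B := aeval A (v * G)) (by rw [← map_mul, mul_left_comm, map_mul, hzero, mul_zero])
  refine ⟨K, θ, hθ0, hθ1, fun k x hx => ?_⟩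
  have hproj : x = aeval A (v * G) *ᵥ x := by
    have h := congr(aeval A $huv *ᵥ x)
    rw [map_add, map_one, one_mulVec, add_mulVec, map_mul, ← mulVec_mulVec, hx, mulVec_zero,
      zero_add] at h
    exact h.symm
  calc ‖A' ^ k *ᵥ x‖ = ‖(A' ^ k * aeval A (v * G)) *ᵥ x‖ := by rw [← mulVec_mulVec, ← hproj]
    _ ≤ K * θ ^ k * ‖x‖ := (linfty_opNorm_mulVec _ _).trans (by gcongr; exact hK k)

theorem exists_norm_le_mul_add_of_isCoprime (A : Matrix ι ι ℝ) {F G : ℝ[X]} (hFG : IsCoprime F G) :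
    ∃ C : ℝ, 0 ≤ C ∧ ∀ x : ι → ℝ, ‖x‖ ≤ C * (‖aeval A F *ᵥ x‖ + ‖aeval A G *ᵥ x‖) := by
  obtain ⟨u, v, huv⟩ := hFG
  refine ⟨max ‖aeval A u‖ ‖aeval A v‖, by positivity, fun x => ?_⟩
  have hx : x = aeval A u *ᵥ (aeval A F *ᵥ x) + aeval A v *ᵥ (aeval A G *ᵥ x) := by
    simpa only [map_add, map_mul, map_one, add_mulVec, one_mulVec, mulVec_mulVec] using
      congr(aeval A $huv *ᵥ x).symm
  calc ‖x‖ ≤ ‖aeval A u‖ * ‖aeval A F *ᵥ x‖ + ‖aeval A v‖ * ‖aeval A G *ᵥ x‖ := by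
        conv_lhs => rw [hx]
        exact norm_add_le_of_le (linfty_opNorm_mulVec _ _) (linfty_opNorm_mulVec _ _)
    _ ≤ _ := by
      rw [mul_add]
      gcongr
      exacts [le_max_left _ _, le_max_right _ _]

theorem exists_one_lt_pow_succ_eq {a : ℝ} (ha : 1 < a) (e : ℕ) : ∃ σ : ℝ, 1 < σ ∧ σ ^ (e + 1) = a :=
  ⟨a ^ (((e + 1 : ℕ) : ℝ)⁻¹), Real.one_lt_rpow ha (by positivity),
    Real.rpow_inv_natCast_pow (zero_le_one.trans ha.le) e.succ_ne_zero⟩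

theorem exists_mul_pow_le_or_mul_pow_le {K₀ C K θ σ : ℝ} {e : ℕ} (hC : 0 ≤ C) (hK : 0 ≤ K)
    (hθ0 : 0 < θ) (hθ1 : θ < 1) (hσ0 : 0 < σ) (hσ : σ ^ (e + 1) = θ⁻¹) :
    ∃ c > 0, ∀ (n : ℕ) (a b x y : ℝ), 0 ≤ a → 0 ≤ b → 0 ≤ x → b ≤ K₀ * θ ^ n * a →
      x ≤ C * (y + b) → 1 ≤ K * x ^ e * b → c * σ ^ n ≤ a ∨ c * σ ^ n ≤ y := by
  set L := K * (C * (1 + |K₀|)) ^ e * |K₀|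
  have hL : 0 ≤ L := by positivity
  refine ⟨1 / (L + 1), by positivity, fun n a b x y ha hb hx hba hxy hone => ?_⟩
  set c := 1 / (L + 1)
  have hc : 0 < c := by positivity
  have hc1 : c ≤ 1 := div_le_one_of_le₀ (by linarith) (by linarith)
  by_contra! hlt
  set R := c * σ ^ n
  have hbR : b ≤ |K₀| * θ ^ n * R :=
    calc b ≤ K₀ * θ ^ n * a := hba
      _ ≤ |K₀| * θ ^ n * R := by gcongr; exacts [le_abs_self _, hlt.1.le]
  have hxR : x ≤ C * (1 + |K₀|) * R :=
    calc x ≤ C * (y + b) := hxy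
      _ ≤ C * (R + |K₀| * 1 * R) := by
        gcongr
        exacts [hlt.2.le, hbR.trans (by gcongr; exact pow_le_one₀ hθ0.le hθ1.le)]
      _ = C * (1 + |K₀|) * R := by ring
  have hσθ : (σ ^ n) ^ (e + 1) * θ ^ n = 1 := by
    rw [← pow_mul, mul_comm n, pow_mul, hσ, inv_pow, inv_mul_cancel₀ (by positivity)]
  have : 1 < (1 : ℝ) :=
    calc 1 ≤ K * x ^ e * b := hone
      _ ≤ K * (C * (1 + |K₀|) * R) ^ e * (|K₀| * θ ^ n * R) := by gcongr
      _ = L * c ^ (e + 1) * ((σ ^ n) ^ (e + 1) * θ ^ n) := by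
        rw [mul_pow _ R]; simp only [L, R]; ring
      _ ≤ L * c := by rw [hσθ, mul_one]; gcongr; exact pow_le_of_le_one hc.le hc1 e.succ_ne_zero
      _ < 1 := by rw [mul_one_div, div_lt_one (by positivity)]; exact lt_add_one L
  exact this.false

theorem exists_mul_pow_le_norm_or_mul_pow_le_norm {N : Matrix ι ι ℤ} (hN : HasErgodicSpectrum N)
    {A' : Matrix ι ι ℝ} (hA : A' * realMatrix N = 1) {F G : ℝ[X]} (hFG : IsCoprime F G)
    (hzero : aeval (realMatrix N) (F * G) = 0) (hF : F ≠ 0)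
    (hFroots : ∀ z : ℂ, aeval z F = 0 → 1 < ‖z‖) (hGroots : ∀ z : ℂ, aeval z G = 0 → ‖z‖ ≤ 1) :
    ∃ c σ : ℝ, 0 < c ∧ 1 < σ ∧ ∀ (n : ℕ) (q : ι → ℤ), q ≠ 0 →
      c * σ ^ n ≤ ‖aeval (realMatrix N) G *ᵥ (Int.cast ∘ (N ^ n *ᵥ q))‖ ∨
        c * σ ^ n ≤ ‖aeval (realMatrix N) F *ᵥ (Int.cast ∘ q)‖ := by
  obtain ⟨K₀, θ, hθ0, hθ1, hcontr⟩ :=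
    exists_norm_pow_mulVec_le_of_one_lt_roots hA hFG hzero hF hFroots
  obtain ⟨C, hC0, hC⟩ := exists_norm_le_mul_add_of_isCoprime (realMatrix N) hFG
  obtain ⟨K, e, hK0, hK⟩ := exists_one_le_mul_norm_pow_mul_norm_aeval_mulVec hN
    (p := G) fun z _ hz hGz => (hGroots z hGz).not_gt hz
  obtain ⟨σ, hσ1, hσ⟩ := exists_one_lt_pow_succ_eq ((one_lt_inv₀ hθ0).2 hθ1) e
  obtain ⟨c, hc, hcσ⟩ := exists_mul_pow_le_or_mul_pow_le (K₀ := K₀) hC0 hK0 hθ0 hθ1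
    (zero_lt_one.trans hσ1) hσ
  refine ⟨c, σ, hc, hσ1, fun n q hq => hcσ n _ ‖aeval (realMatrix N) G *ᵥ (Int.cast ∘ q)‖
    ‖(Int.cast ∘ q : ι → ℝ)‖ _ (norm_nonneg _) (norm_nonneg _) (norm_nonneg _) ?_
    (hC _) (hK q hq)⟩
  have hpow : A' ^ n * realMatrix N ^ n = 1 := pow_mul_pow_eq_one n hA
  have hcomm : Commute (realMatrix N ^ n) (aeval (realMatrix N) G) :=
    (Algebra.commute_of_mem_adjoin_self (aeval_mem_adjoin_singleton ℝ _)).pow_left n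
  have hq' : A' ^ n *ᵥ (aeval (realMatrix N) G *ᵥ (Int.cast ∘ (N ^ n *ᵥ q))) =
      aeval (realMatrix N) G *ᵥ (Int.cast ∘ q) := by
    rw [← realMatrix_mulVec_intCast, map_pow, mulVec_mulVec, mulVec_mulVec,
      mul_assoc, ← hcomm.eq, ← mul_assoc, hpow, one_mul]
  rw [← hq']
  refine hcontr n _ ?_
  rw [mulVec_mulVec, ← map_mul, hzero, zero_mulVec]

theorem transpose_aeval (A : Matrix ι ι ℝ) (P : ℝ[X]) : (aeval A P)ᵀ = aeval Aᵀ P := by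
  simp only [aeval_eq_sum_range, transpose_sum, transpose_smul, transpose_pow]

/-- The columns of `Bu` are uniformly bounded under the powers of `S'`, which stands for `S⁻¹`,
those of `Bs` grow at most like `k ^ D` under the powers of `S`, and every nonzero integer frequency
is, after `n` steps, exponentially large in the directions `Bu` or was so initially in the
directions `Bs`. For a hyperbolic `S`, these columns span the unstable and the stable subspaces. -/
structure FrequencyDichotomy (S S' : Matrix ι ι ℤ) (Bu Bs : Matrix ι ι ℝ) (K : ℝ) (D : ℕ)
    (c σ : ℝ) : Prop where
  norm_inv_pow_mul_le (k : ℕ) : ‖realMatrix S' ^ k * Bu‖ ≤ K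
  norm_pow_mul_le (k : ℕ) : ‖realMatrix S ^ k * Bs‖ ≤ K * ((k : ℝ) + 1) ^ D
  le_norm_or_le_norm (n : ℕ) (q : ι → ℤ) : q ≠ 0 →
    c * σ ^ n ≤ ‖Buᵀ *ᵥ (Int.cast ∘ (Sᵀ ^ n *ᵥ q))‖ ∨ c * σ ^ n ≤ ‖Bsᵀ *ᵥ (Int.cast ∘ q)‖

theorem realMatrix_transpose (S : Matrix ι ι ℤ) : realMatrix Sᵀ = (realMatrix S)ᵀ := rfl

theorem exists_frequencyDichotomy {S S' : Matrix ι ι ℤ} (hS : HasErgodicSpectrum S)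
    (h : S' * S = 1) :
    ∃ Bu Bs K D c σ, 0 ≤ K ∧ 0 < c ∧ 1 < σ ∧ FrequencyDichotomy S S' Bu Bs K D c σ := by
  have hcharpoly : S.charpoly.map (algebraMap ℤ ℝ) ≠ 0 := (S.charpoly_monic.map _).ne_zero
  obtain ⟨F, G, hFG, hF, hG⟩ := exists_mul_eq_of_conj_mem_iff hcharpoly
    (U := {z | 1 < ‖z‖}) (by simp)
  have hF0 : F ≠ 0 := left_ne_zero_of_mul (hFG.trans_ne hcharpoly)
  have hG0 : G ≠ 0 := right_ne_zero_of_mul (hFG.trans_ne hcharpoly)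
  have hG1 (z : ℂ) (hz : aeval z G = 0) : ‖z‖ ≤ 1 := not_lt.1 (hG z hz)
  have hcop : IsCoprime F G := (isCoprime_iff_aeval_ne_zero_of_isAlgClosed ℝ ℂ F G).2 fun z =>
    or_iff_not_imp_left.2 fun hz hGz => hG z hGz (hF z (not_not.1 hz))
  have hzero : aeval (realMatrix S) (F * G) = 0 := by
    rw [hFG, aeval_realMatrix, aeval_self_charpoly, map_zero]
  obtain ⟨K₁, θ, hθ0, hθ1, hK₁⟩ := exists_norm_pow_mul_le_of_one_lt_roots
    (A := realMatrix S) (A' := realMatrix S') (by rw [← map_mul, h, map_one]) hF0 hF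
    (B := aeval (realMatrix S) G) (by rw [← map_mul, hzero])
  obtain ⟨K₂, hK₂0, hK₂⟩ := exists_norm_pow_mul_le_of_roots (realMatrix S) one_pos hG0 hG1
    (B := aeval (realMatrix S) F) (by rw [← map_mul, mul_comm, hzero])
  have hST : HasErgodicSpectrum Sᵀ := by rwa [HasErgodicSpectrum, charpoly_transpose]
  obtain ⟨c, σ, hc, hσ, hdich⟩ := exists_mul_pow_le_norm_or_mul_pow_le_norm hST
    (A' := realMatrix S'ᵀ)
    (by rw [← map_mul, ← transpose_mul, mul_eq_one_comm.1 h, transpose_one, map_one]) hcop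
    (by rw [realMatrix_transpose, ← transpose_aeval, hzero, transpose_zero]) hF0 hF hG1
  have hK₁0 : 0 ≤ K₁ := by simpa only [pow_zero, mul_one] using (norm_nonneg _).trans (hK₁ 0)
  refine ⟨aeval (realMatrix S) G, aeval (realMatrix S) F, max K₁ K₂, G.natDegree, c, σ,
    le_max_of_le_right hK₂0, hc, hσ, fun k => ?_, fun k => ?_, fun n q hq => ?_⟩
  · exact (hK₁ k).trans (mul_le_of_le_one_right hK₁0 (pow_le_one₀ hθ0.le hθ1.le) |>.trans
      (le_max_left _ _))
  · refine (hK₂ k).trans ?_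
    rw [one_pow, mul_one]
    gcongr
    exact le_max_right _ _
  · rw [transpose_aeval, transpose_aeval]
    exact hdich n q hq

end Dichotomy

end LinearAlgebra

/-! ### Fourier coefficients on the torus -/

section L2Bounds
open ComplexConjugate
variable {κ : Type*} {a b : κ → ℂ} {s : Set κ} {C : ℝ}

/-- The family `a` has `ℓ²` norm at most `C` on the index set `s`; phrased through finite partial
sums, so that no summability has to be carried along. -/
def L2BoundOn (a : κ → ℂ) (s : Set κ) (C : ℝ) : Prop :=
  ∀ F : Finset κ, ↑F ⊆ s → ∑ q ∈ F, ‖a q‖ ^ 2 ≤ C ^ 2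

theorem L2BoundOn.of_hasSum {c : ℝ} (h : HasSum (fun q => ‖a q‖ ^ 2) c) (hc : c ≤ C ^ 2) :
    L2BoundOn a Set.univ C := fun F _ =>
  (sum_le_hasSum F (fun _ _ => by positivity) h).trans hc

theorem L2BoundOn.comp_injective {κ' : Type*} {e : κ' → κ} (h : L2BoundOn a s C)
    (he : Function.Injective e) : L2BoundOn (a ∘ e) (e ⁻¹' s) C := fun F hF => by
  simpa using h (F.map ⟨e, he⟩) (by simpa [Set.subset_def] using hF)

theorem L2BoundOn.iUnion {ι : Type*} [Fintype ι] {s : ι → Set κ} (h : ∀ i, L2BoundOn a (s i) C) :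
    L2BoundOn a (⋃ i, s i) (√(Fintype.card ι) * C) := fun F hF => by
  classical
  have hcover (q : κ) (hq : q ∈ F) : ‖a q‖ ^ 2 ≤ ∑ i, if q ∈ s i then ‖a q‖ ^ 2 else 0 := by
    obtain ⟨i, hi⟩ := Set.mem_iUnion.1 (hF hq)
    calc ‖a q‖ ^ 2 = if q ∈ s i then ‖a q‖ ^ 2 else 0 := (if_pos hi).symm
      _ ≤ _ := Finset.single_le_sum (f := fun i => if q ∈ s i then ‖a q‖ ^ 2 else 0)
        (fun _ _ => by positivity) (Finset.mem_univ i)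
  calc ∑ q ∈ F, ‖a q‖ ^ 2
      ≤ ∑ q ∈ F, ∑ i, if q ∈ s i then ‖a q‖ ^ 2 else 0 := Finset.sum_le_sum hcover
    _ = ∑ i, ∑ q ∈ F with q ∈ s i, ‖a q‖ ^ 2 := by
        rw [Finset.sum_comm]
        simp only [Finset.sum_filter]
    _ ≤ ∑ _i : ι, C ^ 2 :=
        Finset.sum_le_sum fun i _ => h i _ fun q hq => (Finset.mem_filter.1 hq).2
    _ = (√(Fintype.card ι) * C) ^ 2 := by
        rw [mul_pow, Real.sq_sqrt (Nat.cast_nonneg _), Finset.sum_const, nsmul_eq_mul,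
          Finset.card_univ]

theorem sum_norm_mul_norm_le {t : Set κ} {A B : ℝ} (ha : L2BoundOn a s A) (hb : L2BoundOn b t B)
    (hA : 0 ≤ A) (hB : 0 ≤ B) {F : Finset κ} (hs : ↑F ⊆ s) (ht : ↑F ⊆ t) :
    ∑ q ∈ F, ‖a q‖ * ‖b q‖ ≤ A * B := by
  refine (Real.sum_mul_le_sqrt_mul_sqrt F _ _).trans ?_
  gcongr
  exacts [Real.sqrt_le_iff.2 ⟨hA, ha F hs⟩, Real.sqrt_le_iff.2 ⟨hB, hb F ht⟩]

theorem norm_le_of_hasSum_of_l2BoundOn {t : Set κ} {c : κ → ℂ} {S : ℂ} (hS : HasSum c S)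
    (hc : ∀ q, ‖c q‖ ≤ ‖a q‖ * ‖b q‖) (hsupp : ∀ q, c q ≠ 0 → q ∈ s ∨ q ∈ t) {α β A B : ℝ}
    (hα : 0 ≤ α) (hβ : 0 ≤ β) (hA : 0 ≤ A) (hB : 0 ≤ B)
    (ha : L2BoundOn a Set.univ α) (hb : L2BoundOn b Set.univ β)
    (has : L2BoundOn a s A) (hbt : L2BoundOn b t B) : ‖S‖ ≤ A * β + α * B := by
  classical
  refine le_of_tendsto hS.norm (Filter.Eventually.of_forall fun F => ?_)
  have hsplit (q : κ) : ‖c q‖ ≤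
      (if q ∈ s then ‖a q‖ * ‖b q‖ else 0) + if q ∈ t then ‖a q‖ * ‖b q‖ else 0 := by
    have := hc q
    have : 0 ≤ ‖a q‖ * ‖b q‖ := by positivity
    by_cases h0 : c q = 0
    · rw [h0, norm_zero]; positivity
    · rcases hsupp q h0 with h | h <;> simp only [h, if_true] <;> split_ifs <;> linarith
  calc ‖∑ q ∈ F, c q‖
      ≤ ∑ q ∈ F, ‖c q‖ := norm_sum_le _ _
    _ ≤ ∑ q ∈ F with q ∈ s, ‖a q‖ * ‖b q‖ + ∑ q ∈ F with q ∈ t, ‖a q‖ * ‖b q‖ := by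
        rw [Finset.sum_filter, Finset.sum_filter, ← Finset.sum_add_distrib]
        exact Finset.sum_le_sum fun q _ => hsplit q
    _ ≤ A * β + α * B := add_le_add
        (sum_norm_mul_norm_le has hb hA hβ (fun q hq => (Finset.mem_filter.1 hq).2)
          (Set.subset_univ _))
        (sum_norm_mul_norm_le ha hbt hα hB (Set.subset_univ _)
          fun q hq => (Finset.mem_filter.1 hq).2)

end L2Bounds

section Fourier
open UnitAddTorus ComplexConjugate
variable {ι : Type*} [Fintype ι] {f g : UnitAddTorus ι → ℂ}

theorem volume_unitAddTorus : (volume : Measure (UnitAddTorus ι)) =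
    Measure.pi fun _ => AddCircle.haarAddCircle := by
  simp only [volume_pi, AddCircle.volume_eq_smul_haarAddCircle, ENNReal.ofReal_one, one_smul]

instance : IsProbabilityMeasure (volume : Measure (UnitAddTorus ι)) := by
  rw [volume_unitAddTorus]
  infer_instance

theorem mFourierCoeff_eq_integral_volume (f : UnitAddTorus ι → ℂ) (q : ι → ℤ) :
    mFourierCoeff f q = ∫ x, mFourier (-q) x * f x := by
  rw [volume_unitAddTorus]
  rfl

theorem hasSum_conj_mFourierCoeff_mul (hf : MemLp f 2 volume) (hg : MemLp g 2 volume) :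
    HasSum (fun q => conj (mFourierCoeff f q) * mFourierCoeff g q) (∫ x, conj (f x) * g x) := by
  rw [volume_unitAddTorus] at hf hg ⊢
  have hcoeff {h : UnitAddTorus ι → ℂ}
      (hh : MemLp h 2 (Measure.pi fun _ => AddCircle.haarAddCircle)) :
      mFourierCoeff hh.toLp = mFourierCoeff h := by
    funext q
    refine integral_congr_ae ?_
    filter_upwards [hh.coeFn_toLp] with x hx
    rw [hx]
  have hint : ∫ x, conj (hf.toLp f x) * hg.toLp g x ∂Measure.pi (fun _ => AddCircle.haarAddCircle) =
      ∫ x, conj (f x) * g x ∂Measure.pi (fun _ => AddCircle.haarAddCircle) := by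
    refine integral_congr_ae ?_
    filter_upwards [hf.coeFn_toLp, hg.coeFn_toLp] with x hx hy
    rw [hx, hy]
  have h := hasSum_prod_mFourierCoeff hf.toLp hg.toLp
  rw [hcoeff, hcoeff] at h
  exact hint ▸ h

theorem l2BoundOn_mFourierCoeff (hf : Measurable f) {B : ℝ} (hB : ∀ x, ‖f x‖ ≤ B) :
    L2BoundOn (mFourierCoeff f) Set.univ B := by
  have hL2 : MemLp f 2 volume :=
    .of_bound hf.aestronglyMeasurable B (Filter.Eventually.of_forall hB)
  have hsum : HasSum (fun q => ‖mFourierCoeff f q‖ ^ 2) (∫ x, ‖f x‖ ^ 2) := by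
    have h := hasSum_conj_mFourierCoeff_mul hL2 hL2
    simp only [Complex.conj_mul', ← Complex.ofReal_pow] at h
    rwa [integral_complex_ofReal, Complex.hasSum_ofReal] at h
  refine .of_hasSum hsum ?_
  calc ∫ x, ‖f x‖ ^ 2 ≤ ∫ _x : UnitAddTorus ι, B ^ 2 :=
        integral_mono_of_nonneg (Filter.Eventually.of_forall fun _ => by positivity)
          (integrable_const _)
          (Filter.Eventually.of_forall fun x => pow_le_pow_left₀ (norm_nonneg _) (hB x) 2)
    _ = B ^ 2 := by rw [integral_const, probReal_univ, one_smul]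

/-- The projection `ℝ^ι → ℝ^ι/ℤ^ι`. -/
def toTorus (v : ι → ℝ) : UnitAddTorus ι := fun i => (v i : UnitAddCircle)

theorem mFourier_apply_add (q : ι → ℤ) (x y : UnitAddTorus ι) :
    mFourier q (x + y) = mFourier q x * mFourier q y := by
  simp only [mFourier, ContinuousMap.coe_mk, fourier_apply, Pi.add_apply, smul_add,
    AddCircle.toCircle_add, Circle.coe_mul, Finset.prod_mul_distrib]

theorem norm_mFourier_apply (q : ι → ℤ) (x : UnitAddTorus ι) : ‖mFourier q x‖ = 1 := by
  simp only [mFourier, ContinuousMap.coe_mk, fourier_apply, norm_prod, Circle.norm_coe,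
    Finset.prod_const_one]

theorem mFourier_toTorus (q : ι → ℤ) (v : ι → ℝ) :
    mFourier q (toTorus v) = Complex.exp (Complex.I * (2 * Real.pi * ∑ i, q i * v i : ℝ)) := by
  simp only [mFourier, toTorus, ContinuousMap.coe_mk, fourier_coe_apply, ← Complex.exp_sum]
  push_cast
  rw [Finset.mul_sum, Finset.mul_sum]
  simp only [div_one]
  congr! 2 with i
  ring

theorem mFourierCoeff_comp_add_right (f : UnitAddTorus ι → ℂ) (y : UnitAddTorus ι) (q : ι → ℤ) :
    mFourierCoeff (fun x => f (x + y)) q = mFourier q y * mFourierCoeff f q := by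
  have hneg : mFourier q y * mFourier (-q) y = 1 := by
    rw [← mFourier_add, add_neg_cancel, mFourier_zero, ContinuousMap.one_apply]
  rw [mFourierCoeff_eq_integral_volume, mFourierCoeff_eq_integral_volume, ← integral_const_mul,
    ← integral_add_right_eq_self (fun x => mFourier q y * (mFourier (-q) x * f x)) y]
  refine integral_congr_ae (Filter.Eventually.of_forall fun x => ?_)
  change mFourier (-q) x * f (x + y) = mFourier q y * (mFourier (-q) (x + y) * f (x + y))
  rw [mFourier_apply_add]
  linear_combination -(mFourier (-q) x * f (x + y)) * hneg

theorem mFourierCoeff_sub (hf : Integrable f) (hg : Integrable g) (q : ι → ℤ) :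
    mFourierCoeff (f - g) q = mFourierCoeff f q - mFourierCoeff g q := by
  have hint {h : UnitAddTorus ι → ℂ} (hh : Integrable h) :
      Integrable fun x => mFourier (-q) x * h x :=
    hh.bdd_mul (mFourier (-q)).continuous.aestronglyMeasurable
      (Filter.Eventually.of_forall fun x => (norm_mFourier_apply _ _).le)
  simp only [mFourierCoeff_eq_integral_volume]
  rw [← integral_sub (hint hf) (hint hg)]
  simp only [Pi.sub_apply, mul_sub]

theorem l2BoundOn_sub_one_mul_mFourierCoeff (hf : Measurable f) (hint : Integrable f)
    {y : UnitAddTorus ι} {B : ℝ} (hB : ∀ x, ‖f (x + y) - f x‖ ≤ B) :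
    L2BoundOn (fun q => (mFourier q y - 1) * mFourierCoeff f q) Set.univ B := by
  have hy : Measurable fun x => f (x + y) := hf.comp (measurable_add_const y)
  convert l2BoundOn_mFourierCoeff (hy.sub hf) hB using 2 with q
  rw [mFourierCoeff_sub (hint.comp_add_right y) hint, mFourierCoeff_comp_add_right, sub_mul,
    one_mul]

theorem norm_exp_I_mul_sub_one_sq (θ : ℝ) :
    ‖Complex.exp (Complex.I * θ) - 1‖ ^ 2 = 2 - 2 * Real.cos θ := by
  rw [Complex.norm_exp_I_mul_ofReal_sub_one, Real.norm_eq_abs, sq_abs, mul_pow,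
    Real.sin_sq_eq_half_sub, mul_div_cancel₀ θ two_ne_zero]
  ring

theorem le_integral_norm_exp_sub_one_sq {ω T : ℝ} (hT : 2 ≤ |ω| * T) :
    T ≤ ∫ t in (0 : ℝ)..T, ‖Complex.exp (Complex.I * (ω * t : ℝ)) - 1‖ ^ 2 := by
  have hω : 0 < |ω| := abs_pos.2 (by rintro rfl; norm_num at hT)
  simp only [norm_exp_I_mul_sub_one_sq]
  rw [intervalIntegral.integral_sub intervalIntegrable_const
      (Continuous.intervalIntegrable (by fun_prop) _ _),
    intervalIntegral.integral_const_mul, intervalIntegral.integral_comp_mul_left _ (abs_pos.1 hω),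
    integral_cos, intervalIntegral.integral_const, mul_zero, Real.sin_zero, sub_zero, sub_zero,
    smul_eq_mul, smul_eq_mul]
  have hsin : 2 * (ω⁻¹ * Real.sin (ω * T)) ≤ 2 / |ω| :=
    calc 2 * (ω⁻¹ * Real.sin (ω * T)) ≤ 2 * |ω⁻¹ * Real.sin (ω * T)| := by
          gcongr
          exact le_abs_self _
      _ ≤ 2 * (|ω|⁻¹ * 1) := by
        rw [abs_mul, abs_inv]; gcongr; exact Real.abs_sin_le_one _
      _ = 2 / |ω| := by rw [mul_one, div_eq_mul_inv]
  have : 2 / |ω| ≤ T := (div_le_iff₀' hω).2 hT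
  linarith

/-- The translates `f (· + t v)` with `0 ≤ t ≤ 1 / R` are averaged: the multiplier
`‖e^{2πi t (q · v)} - 1‖²` has mean at least `1` over this range as soon as `R ≤ |q · v|`. -/
theorem l2BoundOn_mFourierCoeff_of_direction (hf : Measurable f) (hint : Integrable f)
    {v : ι → ℝ} {H η R : ℝ} (hη : 0 ≤ η) (hH : 0 ≤ H) (hR : 0 < R)
    (hv : ∀ t : ℝ, 0 ≤ t → ∀ x, ‖f (x + toTorus (t • v)) - f x‖ ≤ H * t ^ η) :
    L2BoundOn (mFourierCoeff f) {q | R ≤ |∑ i, q i * v i|} (H * R ^ (-η)) := fun F hF => by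
  set m : ℝ → (ι → ℤ) → ℝ := fun t q =>
    ‖Complex.exp (Complex.I * (2 * Real.pi * (∑ i, q i * v i) * t : ℝ)) - 1‖ ^ 2
  have hm (q : ι → ℤ) : Continuous (m · q) := by fun_prop
  have hR' : 0 < R⁻¹ := inv_pos.2 hR
  have hmean (q : ι → ℤ) (hq : q ∈ F) : R⁻¹ ≤ ∫ t in 0..R⁻¹, m t q := by
    refine le_integral_norm_exp_sub_one_sq ?_
    have hRq : R ≤ |∑ i, q i * v i| := hF hq
    rw [abs_mul, abs_of_pos Real.two_pi_pos, ← div_eq_mul_inv, le_div_iff₀ hR]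
    nlinarith [Real.pi_gt_three]
  have hpt (t : ℝ) (ht : t ∈ Set.Icc 0 R⁻¹) :
      ∑ q ∈ F, m t q * ‖mFourierCoeff f q‖ ^ 2 ≤ (H * R ^ (-η)) ^ 2 := by
    have hb : ∀ x, ‖f (x + toTorus (t • v)) - f x‖ ≤ H * R ^ (-η) := fun x =>
      calc _ ≤ H * t ^ η := hv t ht.1 x
        _ ≤ H * R⁻¹ ^ η := by gcongr; exacts [ht.1, ht.2]
        _ = H * R ^ (-η) := by rw [Real.inv_rpow hR.le, Real.rpow_neg hR.le]
    convert l2BoundOn_sub_one_mul_mFourierCoeff hf hint hb F (Set.subset_univ _) using 2 with q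
    have hphase : ∑ i, (q i : ℝ) * (t • v) i = (∑ i, q i * v i) * t := by
      simp only [Pi.smul_apply, smul_eq_mul, Finset.sum_mul, mul_assoc, mul_comm t]
    rw [norm_mul, mul_pow, mFourier_toTorus, hphase, ← mul_assoc]
  refine le_of_mul_le_mul_left ?_ hR'
  calc R⁻¹ * ∑ q ∈ F, ‖mFourierCoeff f q‖ ^ 2
      ≤ ∑ q ∈ F, (∫ t in 0..R⁻¹, m t q) * ‖mFourierCoeff f q‖ ^ 2 := by
        rw [Finset.mul_sum]
        gcongr with q hq
        exact hmean q hq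
    _ = ∫ t in 0..R⁻¹, ∑ q ∈ F, m t q * ‖mFourierCoeff f q‖ ^ 2 := by
        simp only [← intervalIntegral.integral_mul_const]
        exact (intervalIntegral.integral_finsetSum fun q _ =>
          ((hm q).mul continuous_const).intervalIntegrable _ _).symm
    _ ≤ ∫ _t in 0..R⁻¹, (H * R ^ (-η)) ^ 2 :=
        intervalIntegral.integral_mono_on hR'.le
          (Continuous.intervalIntegrable (by fun_prop) _ _)
          intervalIntegrable_const hpt
    _ = R⁻¹ * (H * R ^ (-η)) ^ 2 := by
        rw [intervalIntegral.integral_const, sub_zero, smul_eq_mul]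

open Matrix in
theorem l2BoundOn_mFourierCoeff_of_columns (hf : Measurable f) (hint : Integrable f)
    {B : Matrix ι ι ℝ} {H η R : ℝ} (hη : 0 ≤ η) (hH : 0 ≤ H) (hR : 0 < R)
    (hB : ∀ j (t : ℝ), 0 ≤ t → ∀ x, ‖f (x + toTorus (t • B.col j)) - f x‖ ≤ H * t ^ η) :
    L2BoundOn (mFourierCoeff f) {q | R ≤ ‖Bᵀ *ᵥ (Int.cast ∘ q)‖}
      (√(Fintype.card ι) * (H * R ^ (-η))) := by
  have hcol := L2BoundOn.iUnion fun j =>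
    l2BoundOn_mFourierCoeff_of_direction hf hint hη hH hR (hB j)
  refine fun F hF => hcol F (hF.trans fun q hq => ?_)
  by_contra hlt
  simp only [Set.mem_iUnion, Set.mem_ofPred_eq, not_exists, not_le] at hlt
  refine ((pi_norm_lt_iff hR).2 fun j => ?_).not_ge hq
  simpa only [mulVec, dotProduct, Real.norm_eq_abs, mul_comm] using! hlt j

theorem hasSum_covariance (hf : MemLp f 2 volume) (hg : MemLp g 2 volume) :
    HasSum (fun q => if q = 0 then 0 else
        conj (mFourierCoeff (fun x => conj (f x)) q) * mFourierCoeff g q)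
      ((∫ x, f x * g x) - (∫ x, f x) * ∫ x, g x) := by
  have hprod := hasSum_conj_mFourierCoeff_mul hf.star hg
  have hzero (h : UnitAddTorus ι → ℂ) : mFourierCoeff h 0 = ∫ x, h x := by
    simp only [mFourierCoeff_eq_integral_volume, neg_zero, mFourier_zero, ContinuousMap.one_apply,
      one_mul]
  have h := hasSum_ite_sub_hasSum hprod 0
  simp only [hzero, ← integral_conj] at h
  simpa using! h

end Fourier

/-! ### Lipschitz constants for orbit weights -/

section Bounded

variable {X : Type*} {g h : X → ℂ}

theorem norm_le_supN (hg : BddF g) (x : X) : ‖g x‖ ≤ supN g :=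
  let ⟨c, hc⟩ := hg
  le_ciSup (f := fun x => ‖g x‖) ⟨c, Set.forall_mem_range.2 hc⟩ x

theorem enorm_le_ofReal_supN (hg : BddF g) (x : X) : ‖g x‖ₑ ≤ ENNReal.ofReal (supN g) :=
  ofReal_norm (g x) ▸ ENNReal.ofReal_le_ofReal (norm_le_supN hg x)

theorem supN_nonneg (g : X → ℂ) : 0 ≤ supN g :=
  Real.iSup_nonneg fun _ => norm_nonneg _

theorem eq_zero_of_supN_eq_zero (hg : BddF g) (h : supN g = 0) : g = 0 :=
  funext fun x => norm_le_zero_iff.1 (h ▸ norm_le_supN hg x)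

end Bounded

section WeightedLip

variable {X : Type*} [MeasurableSpace X] {w : X → X → ℝ≥0∞} {g h : X → ℂ}

/-- The Lipschitz constant of `g` with respect to the weight `w`. It is `∞` for non-measurable `g`,
so that bounded functions with finite constant are square integrable for every finite measure. -/
def weightedLip (w : X → X → ℝ≥0∞) (g : X → ℂ) : ℝ≥0∞ :=
  (⨆ _ : ¬ Measurable g, ∞) ⊔ ⨆ (x) (y), ‖g x - g y‖ₑ / w x y

theorem weightedLip_eq_top (hg : ¬ Measurable g) : weightedLip w g = ∞ := by
  simp only [weightedLip, hg, not_false_eq_true, iSup_pos, top_sup_eq]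

theorem measurable_of_weightedLip_ne_top (hg : weightedLip w g ≠ ∞) : Measurable g :=
  not_not.1 (mt weightedLip_eq_top hg)

theorem weightedLip_le {C : ℝ≥0∞} (hm : C ≠ ∞ → Measurable g)
    (hC : ∀ x y, ‖g x - g y‖ₑ / w x y ≤ C) : weightedLip w g ≤ C :=
  sup_le (iSup_le fun hg => (not_not.1 (mt hm hg)).ge) (iSup₂_le hC)

theorem enorm_sub_div_le_weightedLip (g : X → ℂ) (x y : X) :
    ‖g x - g y‖ₑ / w x y ≤ weightedLip w g :=
  (le_iSup₂ (f := fun x y => ‖g x - g y‖ₑ / w x y) x y).trans le_sup_right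

theorem norm_sub_le_of_weightedLip_ne_top (hg : weightedLip w g ≠ ∞) {x y : X} {B : ℝ}
    (hB : 0 ≤ B) (hw : w x y ≤ ENNReal.ofReal B) :
    ‖g x - g y‖ ≤ (weightedLip w g).toReal * B := by
  have h : ‖g x - g y‖ₑ ≤ weightedLip w g * w x y := (ENNReal.div_le_iff_le_mul (.inr hg)
    (.inl (ne_top_of_le_ne_top ENNReal.ofReal_ne_top hw))).1 (enorm_sub_div_le_weightedLip g x y)
  rw [← toReal_enorm, ← ENNReal.toReal_ofReal hB, ← ENNReal.toReal_mul]
  exact ENNReal.toReal_mono (ENNReal.mul_ne_top hg ENNReal.ofReal_ne_top)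
    (h.trans (by gcongr))

theorem weightedLip_conj_le (w : X → X → ℝ≥0∞) (g : X → ℂ) :
    weightedLip w (fun x => (starRingEnd ℂ) (g x)) ≤ weightedLip w g := by
  refine weightedLip_le (fun h => Complex.continuous_conj.measurable.comp
    (measurable_of_weightedLip_ne_top h)) fun x y => ?_
  rw [← map_sub, enorm_eq_iff_norm_eq.2 (RCLike.norm_conj _)]
  exact enorm_sub_div_le_weightedLip g x y

theorem weightedLip_comp_le {T : X → X} (hT : Measurable T) {C : ℝ≥0∞} (hC0 : C ≠ 0)
    (hC : C ≠ ∞) (hw : ∀ x y, w (T x) (T y) ≤ C * w x y) (g : X → ℂ) :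
    weightedLip w (fun x => g (T x)) ≤ C * weightedLip w g := by
  refine weightedLip_le (fun h => ?_) fun x y => ?_
  · exact (measurable_of_weightedLip_ne_top fun hg => h (hg ▸ ENNReal.mul_top hC0)).comp hT
  calc ‖g (T x) - g (T y)‖ₑ / w x y
      = C * (‖g (T x) - g (T y)‖ₑ / (C * w x y)) := by
        rw [← mul_div_assoc, ENNReal.mul_div_mul_left _ _ hC0 hC]
    _ ≤ C * (‖g (T x) - g (T y)‖ₑ / w (T x) (T y)) := by gcongr; exact hw x y
    _ ≤ C * weightedLip w g := by gcongr; exact enorm_sub_div_le_weightedLip g _ _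

theorem measurable_mul_of_weightedLip_ne_top (hg : BddF g) (hh : BddF h)
    (hfin : ENNReal.ofReal (supN g) * weightedLip w h +
      ENNReal.ofReal (supN h) * weightedLip w g ≠ ∞) : Measurable fun x => g x * h x := by
  have key {u v : X → ℂ} (hv : BddF v) (h : ENNReal.ofReal (supN v) * weightedLip w u ≠ ∞) :
      v = 0 ∨ Measurable u := by
    refine or_iff_not_imp_left.2 fun hv0 =>
      measurable_of_weightedLip_ne_top (w := w) fun hu => h ?_
    rw [hu]
    exact ENNReal.mul_top (ENNReal.ofReal_pos.2
      ((supN_nonneg v).lt_of_ne' (mt (eq_zero_of_supN_eq_zero hv) hv0))).ne'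
  rcases key hg (ENNReal.add_ne_top.1 hfin).1 with rfl | hmh
  · simp only [Pi.zero_apply, zero_mul, measurable_const]
  rcases key hh (ENNReal.add_ne_top.1 hfin).2 with rfl | hmg
  · simp only [Pi.zero_apply, mul_zero, measurable_const]
  exact hmg.mul hmh

theorem weightedLip_mul_le (hg : BddF g) (hh : BddF h) :
    weightedLip w (fun x => g x * h x) ≤
      ENNReal.ofReal (supN g) * weightedLip w h + ENNReal.ofReal (supN h) * weightedLip w g := by
  refine weightedLip_le (measurable_mul_of_weightedLip_ne_top hg hh) fun x y => ?_
  have hxy : g x * h x - g y * h y = g x * (h x - h y) + h y * (g x - g y) := by ring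
  calc ‖g x * h x - g y * h y‖ₑ / w x y
      ≤ (‖g x‖ₑ * ‖h x - h y‖ₑ + ‖h y‖ₑ * ‖g x - g y‖ₑ) / w x y := by
        rw [hxy, ← enorm_mul, ← enorm_mul]
        gcongr
        exact enorm_add_le _ _
    _ = ‖g x‖ₑ * (‖h x - h y‖ₑ / w x y) + ‖h y‖ₑ * (‖g x - g y‖ₑ / w x y) := by
        rw [ENNReal.add_div, mul_div_assoc, mul_div_assoc]
    _ ≤ _ := by
        gcongr
        exacts [enorm_le_ofReal_supN hg x, enorm_sub_div_le_weightedLip h x y,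
          enorm_le_ofReal_supN hh y, enorm_sub_div_le_weightedLip g x y]

end WeightedLip

section OrbitWeight

variable {X : Type*} {w : X → X → ℝ≥0∞} {T : X → X} {β : ℝ}

/-- The supremum of a weight `w` along the forward orbits of a pair of points under `T`, where time
`k` is discounted by `(k + 1)^β`. -/
def orbitWeight (w : X → X → ℝ≥0∞) (T : X → X) (β : ℝ) (x y : X) : ℝ≥0∞ :=
  ⨆ k : ℕ, ENNReal.ofReal (((k : ℝ) + 1) ^ (-β)) * w (T^[k] x) (T^[k] y)

theorem le_orbitWeight (w : X → X → ℝ≥0∞) (T : X → X) (β : ℝ) (x y : X) :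
    w x y ≤ orbitWeight w T β x y :=
  le_iSup_of_le 0 (by simp)

theorem orbitWeight_iterate_le (hβ : 0 ≤ β) (m : ℕ) (x y : X) :
    orbitWeight w T β (T^[m] x) (T^[m] y) ≤
      ENNReal.ofReal (((m : ℝ) + 1) ^ β) * orbitWeight w T β x y := by
  refine iSup_le fun k => ?_
  have hle : ((k : ℝ) + 1) ^ (-β) ≤ ((m : ℝ) + 1) ^ β * (((k + m : ℕ) : ℝ) + 1) ^ (-β) := by
    calc ((k : ℝ) + 1) ^ (-β) = ((m : ℝ) + 1) ^ β * (((m : ℝ) + 1) * ((k : ℝ) + 1)) ^ (-β) := by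
          rw [Real.mul_rpow (by positivity) (by positivity), ← mul_assoc,
            ← Real.rpow_add (by positivity), add_neg_cancel, Real.rpow_zero, one_mul]
      _ ≤ _ := by
          refine mul_le_mul_of_nonneg_left (Real.rpow_le_rpow_of_nonpos (by positivity) ?_
            (neg_nonpos.2 hβ)) (by positivity)
          push_cast
          nlinarith [mul_nonneg (Nat.cast_nonneg (α := ℝ) m) (Nat.cast_nonneg (α := ℝ) k)]
  calc _ ≤ ENNReal.ofReal (((m : ℝ) + 1) ^ β) * (ENNReal.ofReal ((((k + m : ℕ) : ℝ) + 1) ^ (-β)) *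
        w (T^[k + m] x) (T^[k + m] y)) := by
        rw [← mul_assoc, ← ENNReal.ofReal_mul (by positivity), ← Function.iterate_add_apply,
          ← Function.iterate_add_apply]
        gcongr
    _ ≤ _ := by
        gcongr
        exact le_iSup (fun k : ℕ => ENNReal.ofReal (((k : ℝ) + 1) ^ (-β)) *
          w (T^[k] x) (T^[k] y)) (k + m)

theorem weightedLip_comp_iterate_le [MeasurableSpace X] (hT : Measurable T) (hβ : 0 ≤ β) (m : ℕ)
    (g : X → ℂ) : weightedLip (orbitWeight w T β) (fun x => g (T^[m] x)) ≤
      ENNReal.ofReal (((m : ℝ) + 1) ^ β) * weightedLip (orbitWeight w T β) g :=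
  weightedLip_comp_le (hT.iterate m) (ENNReal.ofReal_pos.2 (by positivity)).ne'
    ENNReal.ofReal_ne_top (orbitWeight_iterate_le hβ m) g

end OrbitWeight

section HypothesisH

theorem add_one_rpow_le_two_rpow_mul {β : ℝ} (hβ : 0 ≤ β) {k m : ℕ} (hkm : k ≤ m) :
    ((k : ℝ) + 1) ^ β ≤ 2 ^ β * (1 + (m : ℝ) ^ β) := by
  have hkm' : (k : ℝ) ≤ m := Nat.cast_le.2 hkm
  calc ((k : ℝ) + 1) ^ β ≤ (2 * max (1 : ℝ) m) ^ β := by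
        gcongr
        linarith [le_max_left (1 : ℝ) m, le_max_right (1 : ℝ) m]
    _ = 2 ^ β * max 1 (m : ℝ) ^ β := Real.mul_rpow two_pos.le (by positivity)
    _ ≤ 2 ^ β * (1 + (m : ℝ) ^ β) := by
        gcongr
        have : (0 : ℝ) ≤ (m : ℝ) ^ β := by positivity
        rcases max_cases (1 : ℝ) m with h | h <;> simp only [h.1, Real.one_rpow] <;> linarith

theorem exists_pow_mul_one_add_rpow_mul_pow_le (e : ℕ) (β : ℝ) {τ : ℝ} (h0 : 0 ≤ τ) (h1 : τ < 1) :
    ∃ B : ℝ, ∀ n : ℕ, 1 ≤ n → (n : ℝ) ^ e * (1 + (n : ℝ) ^ β) * τ ^ n ≤ B := by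
  obtain ⟨p, hp⟩ := exists_nat_ge β
  obtain ⟨B, hB⟩ := (tendsto_pow_const_mul_const_pow_of_abs_lt_one (e + p)
    (by rwa [abs_of_nonneg h0])).bddAbove_range
  refine ⟨2 * B, fun n hn => ?_⟩
  have hn1 : (1 : ℝ) ≤ n := Nat.one_le_cast.2 hn
  calc (n : ℝ) ^ e * (1 + (n : ℝ) ^ β) * τ ^ n
      ≤ (n : ℝ) ^ e * ((n : ℝ) ^ p + (n : ℝ) ^ p) * τ ^ n := by
        gcongr
        · exact one_le_pow₀ hn1
        · exact Real.rpow_natCast n p ▸ Real.rpow_le_rpow_of_exponent_le hn1 hp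
    _ = 2 * ((n : ℝ) ^ (e + p) * τ ^ n) := by rw [pow_add]; ring
    _ ≤ 2 * B := by gcongr; exact hB ⟨n, rfl⟩

theorem ofReal_le_ofReal_mul_add {x a b C : ℝ} {k₁ k₂ : ℝ≥0∞} (hC : 0 < C) (ha : 0 ≤ a)
    (hb : 0 ≤ b) (hxa : a = 0 → x ≤ 0) (hxb : b = 0 → x ≤ 0)
    (h : k₁ ≠ ∞ → k₂ ≠ ∞ → x ≤ C * (a * k₁.toReal + b * k₂.toReal)) :
    ENNReal.ofReal x ≤
      ENNReal.ofReal C * (ENNReal.ofReal a * k₁ + ENNReal.ofReal b * k₂) := by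
  rcases le_or_gt x 0 with hx | hx
  · simp only [ENNReal.ofReal_of_nonpos hx, zero_le]
  have ha0 : ENNReal.ofReal a ≠ 0 := (ENNReal.ofReal_pos.2
    (ha.lt_of_ne' fun h0 => hx.not_ge (hxa h0))).ne'
  have hb0 : ENNReal.ofReal b ≠ 0 := (ENNReal.ofReal_pos.2
    (hb.lt_of_ne' fun h0 => hx.not_ge (hxb h0))).ne'
  have hC0 := (ENNReal.ofReal_pos.2 hC).ne'
  rcases eq_or_ne k₁ ∞ with rfl | h1
  · simp only [ENNReal.mul_top, ha0, hC0, ne_eq, not_false_eq_true, top_add, le_top]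
  rcases eq_or_ne k₂ ∞ with rfl | h2
  · simp only [ENNReal.mul_top, hb0, hC0, ne_eq, not_false_eq_true, add_top, le_top]
  refine (ENNReal.ofReal_le_ofReal (h h1 h2)).trans_eq ?_
  rw [ENNReal.ofReal_mul hC.le, ENNReal.ofReal_add (by positivity) (by positivity),
    ENNReal.ofReal_mul ha, ENNReal.ofReal_mul hb, ENNReal.ofReal_toReal h1,
    ENNReal.ofReal_toReal h2]

theorem hypothesisH_of_covariance_decay {X : Type*} [MeasurableSpace X] {μ : Measure X}
    {T Tinv : X → X} (hT : MeasurePreserving T μ μ) (hTinv : MeasurePreserving Tinv μ μ)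
    (hleft : Function.LeftInverse Tinv T) (hright : Function.RightInverse Tinv T)
    {w : X → X → ℝ≥0∞} {β τ L : ℝ} (hβ : 0 ≤ β) (hτ0 : 0 ≤ τ) (hτ1 : τ < 1) (hL : 0 ≤ L)
    (hcov : ∀ g h : X → ℂ, BddF g → BddF h → ∀ n : ℕ,
      ENNReal.ofReal ‖covC μ g (fun x => h (T^[n] x))‖ ≤ ENNReal.ofReal (L * τ ^ n) *
        (ENNReal.ofReal (supN h) * weightedLip (orbitWeight w Tinv 0) g +
          ENNReal.ofReal (supN g) * weightedLip (orbitWeight w T β) h)) :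
    HypothesisH μ T Tinv (2 ^ β) (fun n => L * τ ^ n) (fun m => (m : ℝ) ^ β)
      (weightedLip (orbitWeight w Tinv 0)) (weightedLip (orbitWeight w T β)) 1 where
  measurable_T := hT.measurable
  measurable_Tinv := hTinv.measurable
  left_inv := hleft
  right_inv := hright
  measurePreserving_T := hT
  measurePreserving_Tinv := hTinv
  c₀_pos := by positivity
  cov_bound g h hg hh n := by
    refine (hcov g h hg hh n).trans ?_
    rw [add_assoc]
    refine mul_le_mul' (ENNReal.ofReal_le_ofReal ?_) le_add_self
    exact le_mul_of_one_le_left (by positivity) (Real.one_le_rpow one_le_two hβ)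
  K1_comp g _ m := by
    refine (weightedLip_comp_iterate_le hTinv.measurable le_rfl m g).trans ?_
    rw [Real.rpow_zero]
    gcongr
    exact Real.one_le_rpow one_le_two hβ
  K2_comp h _ m k hkm := by
    refine (weightedLip_comp_iterate_le hT.measurable hβ k h).trans ?_
    rw [mul_right_comm, ← ENNReal.ofReal_mul (by positivity)]
    gcongr
    exact add_one_rpow_le_two_rpow_mul hβ hkm
  K1_mul _ _ := weightedLip_mul_le
  K2_mul _ _ := weightedLip_mul_le
  φ_anti n := by
    have : τ ^ (n + 1) ≤ τ ^ n := pow_le_pow_of_le_one hτ0 hτ1.le n.le_succ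
    gcongr
  r_pos := le_rfl
  sup_fin := by
    obtain ⟨B, hB⟩ := exists_pow_mul_one_add_rpow_mul_pow_le 6 β hτ0 hτ1
    refine ⟨L * B, fun n hn => ?_⟩
    rw [mul_one, mul_left_comm]
    gcongr
    exact hB n hn

end HypothesisH

/-! ### Decay of covariances for torus automorphisms -/

section Torus
open UnitAddTorus Matrix ComplexConjugate

variable {d : ℕ} {S S' : Matrix (Fin d) (Fin d) ℤ}

theorem torusAut_one (x : Torus d) : torusAut 1 x = x := by
  funext i
  simp [torusAut, Matrix.one_apply]

theorem torusAut_mul (S S' : Matrix (Fin d) (Fin d) ℤ) (x : Torus d) :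
    torusAut (S * S') x = torusAut S (torusAut S' x) := by
  funext i
  simp only [torusAut, Matrix.mul_apply, Finset.sum_smul, Finset.smul_sum, mul_smul]
  exact Finset.sum_comm

theorem torusAut_iterate (S : Matrix (Fin d) (Fin d) ℤ) (n : ℕ) :
    (torusAut S)^[n] = torusAut (S ^ n) := by
  induction n with
  | zero => funext x; simp only [Function.iterate_zero, id_eq, pow_zero, torusAut_one]
  | succ n ih => funext x; rw [Function.iterate_succ_apply', ih, pow_succ', torusAut_mul]

theorem leftInverse_torusAut (h : S' * S = 1) :
    Function.LeftInverse (torusAut S') (torusAut S) := fun x => by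
  rw [← torusAut_mul, h, torusAut_one]

theorem torusAut_add (S : Matrix (Fin d) (Fin d) ℤ) (x y : Torus d) :
    torusAut S (x + y) = torusAut S x + torusAut S y := by
  funext i
  simp only [torusAut, Pi.add_apply, smul_add, Finset.sum_add_distrib]

theorem continuous_torusAut (S : Matrix (Fin d) (Fin d) ℤ) : Continuous (torusAut S) := by
  unfold torusAut
  fun_prop

theorem measurePreserving_torusAut (h : S * S' = 1) :
    MeasurePreserving (torusAut S) (volume : Measure (Torus d)) volume :=
  (AddMonoidHom.mk' (torusAut S) (torusAut_add S)).measurePreserving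
    (continuous_torusAut S) (leftInverse_torusAut h).surjective rfl

theorem measurableEmbedding_torusAut (h : S * S' = 1) : MeasurableEmbedding (torusAut S) :=
  (MeasurableEquiv.mk ⟨torusAut S, torusAut S', leftInverse_torusAut (mul_eq_one_comm.1 h),
    leftInverse_torusAut h⟩ (continuous_torusAut S).measurable
    (continuous_torusAut S').measurable).measurableEmbedding

theorem torusAut_toTorus (S : Matrix (Fin d) (Fin d) ℤ) (v : Fin d → ℝ) :
    torusAut S (toTorus v) = toTorus (realMatrix S *ᵥ v) := by
  funext i
  have hcoe := map_sum (QuotientAddGroup.mk' (AddSubgroup.zmultiples (1 : ℝ)))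
    (fun j => S i j • v j) Finset.univ
  simp only [map_zsmul] at hcoe
  simp only [zsmul_eq_mul] at hcoe
  exact hcoe.symm

theorem toTorus_surjective : Function.Surjective (toTorus : (Fin d → ℝ) → Torus d) := fun x => by
  choose v hv using fun i => QuotientAddGroup.mk_surjective (x i)
  exact ⟨v, funext hv⟩

theorem mFourier_torusAut (S : Matrix (Fin d) (Fin d) ℤ) (q : Fin d → ℤ) (x : Torus d) :
    mFourier q (torusAut S x) = mFourier (Sᵀ *ᵥ q) x := by
  obtain ⟨v, rfl⟩ := toTorus_surjective x
  have hdual : ∑ i, (q i : ℝ) * (realMatrix S *ᵥ v) i = ∑ i, ((Sᵀ *ᵥ q) i : ℝ) * v i := by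
    have h := dotProduct_mulVec (Int.cast ∘ q) (realMatrix S) v
    rw [← mulVec_transpose, ← realMatrix_transpose, realMatrix_mulVec_intCast] at h
    exact h
  rw [torusAut_toTorus, mFourier_toTorus, mFourier_toTorus, hdual]

theorem mFourierCoeff_comp_torusAut (h : S * S' = 1) (f : Torus d → ℂ) (q : Fin d → ℤ) :
    mFourierCoeff (fun x => f (torusAut S' x)) q = mFourierCoeff f (Sᵀ *ᵥ q) := by
  have hS := leftInverse_torusAut (mul_eq_one_comm.1 h)
  rw [mFourierCoeff_eq_integral_volume, mFourierCoeff_eq_integral_volume,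
    ← (measurePreserving_torusAut h).integral_comp (measurableEmbedding_torusAut h)]
  refine integral_congr_ae (.of_forall fun x => ?_)
  simp only [hS x, mFourier_torusAut, mulVec_neg]

end Torus

section Holder
open Matrix
open scoped Matrix.Norms.Operator

variable {d : ℕ} {η : ℝ}

theorem torusDist_nonneg (x y : Torus d) : 0 ≤ torusDist x y := Real.sqrt_nonneg _

theorem torusDist_pos {x y : Torus d} (h : x ≠ y) : 0 < torusDist x y := by
  obtain ⟨i, hi⟩ := Function.ne_iff.1 h
  have hnorm : 0 < ‖x i - y i‖ := norm_pos_iff.2 (sub_ne_zero.2 hi)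
  exact Real.sqrt_pos.2
    (Finset.sum_pos' (fun i _ => by positivity) ⟨i, Finset.mem_univ i, by positivity⟩)

theorem torusDist_add_toTorus_le (x : Torus d) (v : Fin d → ℝ) :
    torusDist (x + toTorus v) x ≤ √d * ‖v‖ := by
  have hcoord (i : Fin d) : ‖(x + toTorus v) i - x i‖ ≤ ‖v‖ := by
    rw [Pi.add_apply, add_sub_cancel_left]
    exact (QuotientAddGroup.norm_mk_le_norm (S := AddSubgroup.zmultiples (1 : ℝ))).trans
      (norm_le_pi_norm v i)
  calc torusDist (x + toTorus v) x ≤ √(∑ _i : Fin d, ‖v‖ ^ 2) :=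
        Real.sqrt_le_sqrt (Finset.sum_le_sum fun i _ => pow_le_pow_left₀ (norm_nonneg _)
          (hcoord i) 2)
    _ = √d * ‖v‖ := by
        rw [Finset.sum_const, Finset.card_univ, Fintype.card_fin, nsmul_eq_mul,
          Real.sqrt_mul (Nat.cast_nonneg d), Real.sqrt_sq (norm_nonneg v)]

theorem norm_sub_le_of_holderC_ne_top {g : Torus d → ℂ} (hg : holderC η g ≠ ∞) (x y : Torus d) :
    ‖g x - g y‖ ≤ (holderC η g).toReal * torusDist x y ^ η := by
  by_cases h : x = y
  · rw [h, sub_self, norm_zero]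
    exact mul_nonneg ENNReal.toReal_nonneg (Real.rpow_nonneg (torusDist_nonneg y y) η)
  · rw [← div_le_iff₀ (Real.rpow_pos_of_pos (torusDist_pos h) η)]
    exact (ENNReal.ofReal_le_iff_le_toReal hg).1
      (le_iSup_of_le x (le_iSup_of_le y (le_iSup_of_le h le_rfl)))

theorem continuous_of_holderC_ne_top (hη : 0 < η) {g : Torus d → ℂ} (hg : holderC η g ≠ ∞) :
    Continuous g := by
  refine continuous_iff_continuousAt.2 fun x => tendsto_iff_norm_sub_tendsto_zero.2
    (squeeze_zero (fun _ => norm_nonneg _) (fun y => norm_sub_le_of_holderC_ne_top hg y x) ?_)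
  have hc : Continuous fun y : Torus d => (holderC η g).toReal * torusDist y x ^ η := by
    unfold torusDist
    exact continuous_const.mul (Continuous.rpow_const (by fun_prop) fun _ => .inr hη.le)
  simpa [torusDist, Real.zero_rpow hη.ne'] using hc.tendsto x

/-- The weight `d(x, y)^η`, whose Lipschitz functions are the `η`-Hölder functions. -/
def holderWeight (d : ℕ) (η : ℝ) (x y : Torus d) : ℝ≥0∞ := ENNReal.ofReal (torusDist x y ^ η)

theorem weightedLip_le_holderC (hη : 0 < η) {w : Torus d → Torus d → ℝ≥0∞}
    (hw : ∀ x y, holderWeight d η x y ≤ w x y) (g : Torus d → ℂ) :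
    weightedLip w g ≤ holderC η g := by
  refine weightedLip_le (fun hg => (continuous_of_holderC_ne_top hη hg).measurable) fun x y => ?_
  by_cases h : x = y
  · simp [h]
  calc ‖g x - g y‖ₑ / w x y ≤ ENNReal.ofReal ‖g x - g y‖ / holderWeight d η x y := by
        rw [ofReal_norm]
        gcongr
        exact hw x y
    _ = ENNReal.ofReal (‖g x - g y‖ / torusDist x y ^ η) :=
        (ENNReal.ofReal_div_of_pos (Real.rpow_pos_of_pos (torusDist_pos h) η)).symm
    _ ≤ holderC η g := le_iSup_of_le x (le_iSup_of_le y (le_iSup_of_le h le_rfl))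

theorem linfty_opNorm_col_le {m n : Type*} [Fintype m] [Fintype n] (A : Matrix m n ℝ) (j : n) :
    ‖A.col j‖ ≤ ‖A‖ := by
  classical
  rw [← mulVec_single_one]
  refine (linfty_opNorm_mulVec A _).trans_eq ?_
  rw [Pi.norm_single, norm_one, mul_one]

theorem orbitWeight_add_toTorus_le (hη : 0 ≤ η) {A : Matrix (Fin d) (Fin d) ℤ}
    {B : Matrix (Fin d) (Fin d) ℝ} {K : ℝ} {D : ℕ} (hK : 0 ≤ K)
    (hB : ∀ k : ℕ, ‖realMatrix A ^ k * B‖ ≤ K * ((k : ℝ) + 1) ^ D)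
    (j : Fin d) {t : ℝ} (ht : 0 ≤ t) (x : Torus d) :
    orbitWeight (holderWeight d η) (torusAut A) (D * η) (x + toTorus (t • B.col j)) x ≤
      ENNReal.ofReal ((√d * K) ^ η * t ^ η) := by
  refine iSup_le fun k => ?_
  have hnorm : ‖realMatrix (A ^ k) *ᵥ (t • B.col j)‖ ≤ t * (K * ((k : ℝ) + 1) ^ D) := by
    rw [mulVec_smul, norm_smul, Real.norm_of_nonneg ht, map_pow]
    gcongr
    exact (linfty_opNorm_col_le (realMatrix A ^ k * B) j).trans (hB k)
  rw [holderWeight, ← ENNReal.ofReal_mul (by positivity), torusAut_iterate, torusAut_add,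
    torusAut_toTorus]
  refine ENNReal.ofReal_le_ofReal ?_
  calc _ ≤ ((k : ℝ) + 1) ^ (-(D * η)) * (√d * (t * (K * ((k : ℝ) + 1) ^ D))) ^ η := by
        gcongr
        · exact torusDist_nonneg _ _
        · exact (torusDist_add_toTorus_le _ _).trans (by gcongr)
    _ = (√d * K) ^ η * t ^ η := by
        rw [show √d * (t * (K * ((k : ℝ) + 1) ^ D)) = √d * K * t * ((k : ℝ) + 1) ^ D by ring,
          Real.mul_rpow (by positivity) (by positivity), Real.mul_rpow (by positivity) ht,
          ← Real.rpow_natCast_mul (by positivity), mul_left_comm,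
          ← Real.rpow_add (by positivity), neg_add_cancel, Real.rpow_zero, mul_one]

theorem l2BoundOn_mFourierCoeff_of_weightedLip (hη : 0 ≤ η) {A : Matrix (Fin d) (Fin d) ℤ}
    {B : Matrix (Fin d) (Fin d) ℝ} {K : ℝ} {D : ℕ} (hK : 0 ≤ K)
    (hB : ∀ k : ℕ, ‖realMatrix A ^ k * B‖ ≤ K * ((k : ℝ) + 1) ^ D) {f : Torus d → ℂ}
    (hf : BddF f) (hfin : weightedLip (orbitWeight (holderWeight d η) (torusAut A) (D * η)) f ≠ ∞)
    {R : ℝ} (hR : 0 < R) :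
    L2BoundOn (UnitAddTorus.mFourierCoeff f) {q | R ≤ ‖Bᵀ *ᵥ (Int.cast ∘ q)‖}
      (√d * (√d * K) ^ η *
        (weightedLip (orbitWeight (holderWeight d η) (torusAut A) (D * η)) f).toReal *
        R ^ (-η)) := by
  have hm := measurable_of_weightedLip_ne_top hfin
  have hint : Integrable f :=
    .of_bound hm.aestronglyMeasurable (supN f) (.of_forall (norm_le_supN hf))
  convert l2BoundOn_mFourierCoeff_of_columns hm hint hη
    (H := (weightedLip (orbitWeight (holderWeight d η) (torusAut A) (D * η)) f).toReal *
      (√d * K) ^ η) (by positivity) hR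
    (fun j t ht x => ?_) using 1
  · rw [Fintype.card_fin]
    ring
  · rw [mul_assoc]
    exact norm_sub_le_of_weightedLip_ne_top hfin (by positivity)
      (orbitWeight_add_toTorus_le hη hK hB j ht x)

end Holder

section Decay
open UnitAddTorus Matrix ComplexConjugate
open scoped Matrix.Norms.Operator

variable {d : ℕ} {S S' : Matrix (Fin d) (Fin d) ℤ} {g h : Torus d → ℂ}

theorem covC_comp_right {X : Type*} [MeasurableSpace X] {μ : Measure X} {T Tinv : X → X}
    (hT : MeasurePreserving T μ μ) (hemb : MeasurableEmbedding T)
    (hleft : Function.LeftInverse Tinv T) (g h : X → ℂ) :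
    covC μ g (fun x => h (T x)) = covC μ (fun x => g (Tinv x)) h := by
  have key (u : X → ℂ) : ∫ x, u (T x) ∂μ = ∫ x, u x ∂μ := hT.integral_comp hemb u
  have hg := key fun x => g (Tinv x)
  have hgh := key fun x => g (Tinv x) * h x
  simp only [hleft _] at hg hgh
  simp only [covC, hg, hgh, key h]

theorem norm_covC_comp_torusAut_le (hS : S' * S = 1) (hg : BddF g) (hh : BddF h)
    (hmg : Measurable g) (hmh : Measurable h) {s t : Set (Fin d → ℤ)}
    (hst : ∀ q, q ≠ 0 → Sᵀ *ᵥ q ∈ s ∨ q ∈ t) {A B : ℝ} (hA : 0 ≤ A) (hB : 0 ≤ B)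
    (hgs : L2BoundOn (mFourierCoeff fun x => conj (g x)) s A)
    (hht : L2BoundOn (mFourierCoeff h) t B) :
    ‖covC volume g (fun x => h (torusAut S x))‖ ≤ A * supN h + supN g * B := by
  have hS' : S * S' = 1 := mul_eq_one_comm.1 hS
  have hleft := leftInverse_torusAut hS
  have hmg' : Measurable fun x => g (torusAut S' x) := hmg.comp (continuous_torusAut S').measurable
  have hinj : Function.Injective (Sᵀ *ᵥ ·) := mulVec_injective_of_isUnit
    (IsUnit.of_mul_eq_one S'ᵀ (by rw [← transpose_mul, hS, transpose_one]))
  have hcoeff : (mFourierCoeff fun x => conj (g (torusAut S' x))) =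
      (mFourierCoeff fun x => conj (g x)) ∘ (Sᵀ *ᵥ ·) :=
    funext (mFourierCoeff_comp_torusAut hS' fun x => conj (g x))
  have hconj : ∀ x, ‖conj (g (torusAut S' x))‖ ≤ supN g := fun x =>
    (RCLike.norm_conj _).trans_le (norm_le_supN hg _)
  have hL2 {u : Torus d → ℂ} {C : ℝ} (hu : Measurable u) (hC : ∀ x, ‖u x‖ ≤ C) :
      MemLp u 2 volume := .of_bound hu.aestronglyMeasurable C (.of_forall hC)
  rw [covC_comp_right (measurePreserving_torusAut hS') (measurableEmbedding_torusAut hS') hleft]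
  refine norm_le_of_hasSum_of_l2BoundOn
    (hasSum_covariance (hL2 hmg' fun x => norm_le_supN hg _) (hL2 hmh (norm_le_supN hh)))
    (fun q => ?_) (fun q hq => hst q fun hq0 => hq (if_pos hq0))
    (supN_nonneg g) (supN_nonneg h) hA hB
    (l2BoundOn_mFourierCoeff (Complex.continuous_conj.measurable.comp hmg') hconj)
    (l2BoundOn_mFourierCoeff hmh (norm_le_supN hh))
    (hcoeff ▸ hgs.comp_injective hinj) hht
  split_ifs
  · rw [norm_zero]
    positivity
  · exact (norm_mul _ _).trans_le (by rw [RCLike.norm_conj]; rfl)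

theorem norm_covC_iterate_le {η : ℝ} (hη : 0 ≤ η) (hS : S' * S = 1)
    {Bu Bs : Matrix (Fin d) (Fin d) ℝ} {K c σ : ℝ} {D : ℕ} (hK : 0 ≤ K) (hc : 0 < c) (hσ : 0 < σ)
    (hdich : FrequencyDichotomy S S' Bu Bs K D c σ) (hg : BddF g) (hh : BddF h)
    (hgfin : weightedLip (orbitWeight (holderWeight d η) (torusAut S') 0) g ≠ ∞)
    (hhfin : weightedLip (orbitWeight (holderWeight d η) (torusAut S) (D * η)) h ≠ ∞) (n : ℕ) :
    ‖covC volume g (fun x => h ((torusAut S)^[n] x))‖ ≤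
      √d * (√d * K) ^ η * (c * σ ^ n) ^ (-η) *
        (supN h * (weightedLip (orbitWeight (holderWeight d η) (torusAut S') 0) g).toReal +
          supN g *
            (weightedLip (orbitWeight (holderWeight d η) (torusAut S) (D * η)) h).toReal) := by
  have hR : 0 < c * σ ^ n := by positivity
  have hconj := weightedLip_conj_le (orbitWeight (holderWeight d η) (torusAut S') 0) g
  have hBu (k : ℕ) : ‖realMatrix S' ^ k * Bu‖ ≤ K * ((k : ℝ) + 1) ^ 0 := by
    rw [pow_zero, mul_one]
    exact hdich.norm_inv_pow_mul_le k
  have hgL := l2BoundOn_mFourierCoeff_of_weightedLip hη hK hBu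
    (f := fun x => conj (g x)) (hg.imp fun C hC x => (RCLike.norm_conj _).trans_le (hC x))
    (by simpa using ne_top_of_le_ne_top hgfin hconj) hR
  have hhL := l2BoundOn_mFourierCoeff_of_weightedLip hη hK hdich.norm_pow_mul_le hh hhfin hR
  have hcov := norm_covC_comp_torusAut_le (pow_mul_pow_eq_one n hS) hg hh
    (measurable_of_weightedLip_ne_top hgfin) (measurable_of_weightedLip_ne_top hhfin)
    (fun q hq => by simpa using hdich.le_norm_or_le_norm n q hq) (by positivity) (by positivity)
    hgL hhL
  rw [Nat.cast_zero, zero_mul] at hcov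
  rw [torusAut_iterate]
  refine hcov.trans ((add_le_add_left (mul_le_mul_of_nonneg_right
    (mul_le_mul_of_nonneg_right (mul_le_mul_of_nonneg_left (ENNReal.toReal_mono hgfin hconj)
      (by positivity)) (by positivity)) (supN_nonneg h)) _).trans_eq (by ring))

theorem exists_ofReal_norm_covC_iterate_le {η : ℝ} (hη : 0 ≤ η) (hS : S' * S = 1)
    {Bu Bs : Matrix (Fin d) (Fin d) ℝ} {K c σ : ℝ} {D : ℕ} (hK : 0 ≤ K) (hc : 0 < c) (hσ : 0 < σ)
    (hdich : FrequencyDichotomy S S' Bu Bs K D c σ) :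
    ∃ L : ℝ, 0 ≤ L ∧ ∀ g h : Torus d → ℂ, BddF g → BddF h → ∀ n : ℕ,
      ENNReal.ofReal ‖covC volume g (fun x => h ((torusAut S)^[n] x))‖ ≤
        ENNReal.ofReal (L * (σ ^ (-η)) ^ n) *
          (ENNReal.ofReal (supN h) *
              weightedLip (orbitWeight (holderWeight d η) (torusAut S') 0) g +
            ENNReal.ofReal (supN g) *
              weightedLip (orbitWeight (holderWeight d η) (torusAut S) (D * η)) h) := by
  -- The summand 1 keeps the constant positive, so that it may multiply an infinite seminorm.
  refine ⟨(√d * (√d * K) ^ η + 1) * c ^ (-η), by positivity, fun g h hg hh n => ?_⟩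
  have hRη : (c * σ ^ n) ^ (-η) = c ^ (-η) * (σ ^ (-η)) ^ n := by
    rw [Real.mul_rpow hc.le (by positivity), ← Real.rpow_natCast_mul hσ.le,
      ← Real.rpow_mul_natCast hσ.le, mul_comm (n : ℝ)]
  refine ofReal_le_ofReal_mul_add (by positivity) (supN_nonneg h) (supN_nonneg g)
    (fun hh0 => ?_) (fun hg0 => ?_) fun hgfin hhfin => ?_
  · simp [covC, eq_zero_of_supN_eq_zero hh hh0]
  · simp [covC, eq_zero_of_supN_eq_zero hg hg0]
  · refine (norm_covC_iterate_le hη hS hK hc hσ hdich hg hh hgfin hhfin n).trans ?_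
    have hg0 := supN_nonneg g
    have hh0 := supN_nonneg h
    rw [hRη, ← mul_assoc]
    gcongr
    exact le_add_of_nonneg_right zero_le_one

theorem hasErgodicSpectrum_of_noRootOfUnityEigenvalue (hdet : IsUnit S.det)
    (hEig : NoRootOfUnityEigenvalue S) : HasErgodicSpectrum S := by
  intro z hz
  have hchar : (S.map fun a => (a : ℂ)).charpoly = S.charpoly.map (Int.castRingHom ℂ) :=
    charpoly_map S (Int.castRingHom ℂ)
  refine ⟨?_, hEig z (by rwa [hchar, Polynomial.IsRoot, Polynomial.eval_map])⟩
  rintro rfl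
  have hcoeff : S.charpoly.coeff 0 = 0 := by
    simpa [Polynomial.aeval_def, Polynomial.eval₂_at_zero] using hz
  refine hdet.ne_zero ?_
  rw [det_eq_sign_charpoly_coeff, hcoeff, mul_zero]

end Decay

theorem statement13_general {d : ℕ} {S : Matrix (Fin d) (Fin d) ℤ} (hdet : IsUnit S.det)
    (hEig : NoRootOfUnityEigenvalue S) {η : ℝ} (hη : 0 < η) :
    ∃ (K1 K2 : (Torus d → ℂ) → ℝ≥0∞) (c₀ : ℝ) (φ : ℕ → ℝ) (β : ℝ) (r : ℕ) (c : ℝ),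
      0 ≤ β ∧ 0 < c ∧
      HypothesisH (volume : Measure (Torus d)) (torusAut S) (torusAut S⁻¹) c₀ φ
        (fun m : ℕ => (m : ℝ) ^ β) K1 K2 r ∧
      ∀ g : Torus d → ℂ, BddF g →
        K1 g ≤ ENNReal.ofReal c * holderC η g ∧ K2 g ≤ ENNReal.ofReal c * holderC η g := by
  have hinv : S⁻¹ * S = 1 := Matrix.nonsing_inv_mul S hdet
  have hinv' : S * S⁻¹ = 1 := Matrix.mul_nonsing_inv S hdet
  obtain ⟨Bu, Bs, K, D, c, σ, hK, hc, hσ, hdich⟩ :=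
    exists_frequencyDichotomy (hasErgodicSpectrum_of_noRootOfUnityEigenvalue hdet hEig) hinv
  have hσ0 : 0 < σ := one_pos.trans hσ
  obtain ⟨L, hL, hcov⟩ := exists_ofReal_norm_covC_iterate_le hη.le hinv hK hc hσ0 hdich
  have hβ : 0 ≤ (D : ℝ) * η := by positivity
  have hH := hypothesisH_of_covariance_decay (measurePreserving_torusAut hinv')
    (measurePreserving_torusAut hinv) (leftInverse_torusAut hinv) (leftInverse_torusAut hinv')
    hβ (by positivity) (Real.rpow_lt_one_of_one_lt_of_neg hσ (neg_lt_zero.2 hη)) hL hcov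
  refine ⟨_, _, _, _, D * η, 1, 1, hβ, one_pos, hH, fun g _ => ?_⟩
  rw [ENNReal.ofReal_one, one_mul]
  exact ⟨weightedLip_le_holderC hη (le_orbitWeight _ _ _) g,
    weightedLip_le_holderC hη (le_orbitWeight _ _ _) g⟩

/-- An ergodic algebraic automorphism of the torus satisfies Hypothesis H,
with `K⁽¹⁾` and `K⁽²⁾` dominated by the η-Hölder constant. -/
theorem statement13 (d : ℕ) (hd : 2 ≤ d) (S : Matrix (Fin d) (Fin d) ℤ) (hdet : S.det = 1)
    (hEig : NoRootOfUnityEigenvalue S) (η : ℝ) (hη : 0 < η) :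
    ∃ (K1 K2 : (Torus d → ℂ) → ℝ≥0∞) (c₀ : ℝ) (φ : ℕ → ℝ) (β : ℝ) (r : ℕ) (c : ℝ),
      0 ≤ β ∧ 0 < c ∧
      HypothesisH (volume : Measure (Torus d)) (torusAut S) (torusAut S⁻¹) c₀ φ
        (fun m : ℕ => (m : ℝ) ^ β) K1 K2 r ∧
      ∀ g : Torus d → ℂ, BddF g →
        K1 g ≤ ENNReal.ofReal c * holderC η g ∧ K2 g ≤ ENNReal.ofReal c * holderC η g :=
  statement13_general (hdet ▸ isUnit_one) hEig hη
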